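/- (Theorem 2, ℓ∞ contraction for sparse regression.) Assume the mutual coherence condition: n^{−1}X_{*j}ᵀX_{*j} = 1 for all j ∈ [p] and max_{j≠l} |n^{−1}X_{*j}ᵀX_{*l}| ≤ τ̄. Suppose Y = Xβ* + W where β* has sparsity s* satisfying τ̄ s* ≤ 1/9 and W is sub-Gaussian with parameter ρ, and let Π be the sparse regression posterior of Corollary 4. Then for any constants λ, ρ > 0 there exists a constant D_{λ,ρ} > 0 depending only on λ, ρ such that for every D > D_{λ,ρ} there exist constants M, C' > 0 depending only on λ, ρ, D with: E Π( ‖β − β*‖_∞ > M √((log p)/n) | Y ) ≤ p^{−C'}. -/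

import Mathlib

open MeasureTheory Real Matrix
open scoped ENNReal Classical

/-- Euclidean norm of a finitely-indexed real vector. -/
noncomputable def enr {ι : Type*} [Fintype ι] (v : ι → ℝ) : ℝ :=
  Real.sqrt (∑ i, v i ^ 2)

/-- Euclidean inner product. -/
noncomputable def ipr {ι : Type*} [Fintype ι] (u v : ι → ℝ) : ℝ :=
  ∑ i, u i * v i

/-- Sub-Gaussian condition (2.2): `P(|⟨W,K⟩| > t) ≤ exp(-ρ t²/2)` for every unit vector `K`. -/
def subG {ι Ω : Type*} [Fintype ι] [MeasurableSpace Ω] (P : Measure Ω) (ρ : ℝ)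
    (W : Ω → ι → ℝ) : Prop :=
  ∀ K : ι → ℝ, enr K = 1 → ∀ t : ℝ, 0 < t →
    P {ω | t < |ipr (W ω) K|} ≤ ENNReal.ofReal (Real.exp (-ρ * t ^ 2 / 2))

/-- Determinant of the Gram matrix `AᵀA`. -/
noncomputable def gramDet {N κ : Type*} [Fintype N] [Fintype κ] [DecidableEq κ]
    (A : Matrix N κ ℝ) : ℝ := (Aᵀ * A).det

/-- Generic posterior probability for a structured linear model.
`ι` indexes the models (structures), `κ i` the coordinates of the parameter of model `i`,
`A i` is the matrix of the linear operator `𝒳` of model `i`, `w i` the model-selection prior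
weight (with the Gamma-correction already cancelled against the Laplace normalizing constant),
`emb i` maps a parameter to the object the posterior statement is about, `Y` is the data,
`Sel` restricts the model index and `U` the embedded parameter. -/
noncomputable def gpostP {Θ N ι : Type*} [Fintype N] [Fintype ι]
    {κ : ι → Type*} [∀ i, Fintype (κ i)] [∀ i, DecidableEq (κ i)]
    (w : ι → ℝ) (A : (i : ι) → Matrix N (κ i) ℝ)
    (emb : (i : ι) → (κ i → ℝ) → Θ) (lam : ℝ) (Y : N → ℝ)
    (Sel : Set ι) (U : Set Θ) : ℝ :=
  (∑ i : ι, (if i ∈ Sel then w i else 0) * Real.sqrt (gramDet (A i)) *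
      (lam / Real.sqrt π) ^ Fintype.card (κ i) *
      ∫ Q in {Q : κ i → ℝ | emb i Q ∈ U},
        Real.exp (-(1/2) * (enr fun t => Y t - (A i).mulVec Q t) ^ 2
          - lam * enr ((A i).mulVec Q))) /
  (∑ i : ι, w i * Real.sqrt (gramDet (A i)) *
      (lam / Real.sqrt π) ^ Fintype.card (κ i) *
      ∫ Q : κ i → ℝ,
        Real.exp (-(1/2) * (enr fun t => Y t - (A i).mulVec Q t) ^ 2
          - lam * enr ((A i).mulVec Q)))

/-- The submatrix `X_{*S}` of the columns of `X` indexed by `S`. -/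
noncomputable def colSub {n p : ℕ} (X : Matrix (Fin n) (Fin p) ℝ) (S : Finset (Fin p)) :
    Matrix (Fin n) ↥S ℝ := fun i j => X i j

/-- The coefficient vector `β` with `β_S` on `S` and `β_{S^c} = 0`. -/
noncomputable def sparseVec {p : ℕ} (S : Finset (Fin p)) (Q : ↥S → ℝ) : Fin p → ℝ :=
  fun j => if h : j ∈ S then Q ⟨j, h⟩ else 0

/-- The posterior distribution of the sparse-regression prior: `s` is sampled with weight
proportional to `(Γ(s)/Γ(s/2)) exp(-2Ds log(ep/s))` on `[p]`, `S` uniformly from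
`𝒵̄_s = {S : |S| = s, det(X_{*S}ᵀX_{*S}) > 0}`, and `β_S` from the elliptical Laplace
density `∝ exp(-λ‖X_{*S}β_S‖)` with `β_{S^c} = 0`; the Gaussian pseudo-likelihood
`∝ exp(-½‖Y - Xβ‖²)` is used.  `SS` restricts the selected support `S` and `U` restricts
the coefficient vector `β`.  (The Gamma correction factor has been cancelled against the
Laplace normalizing constant.) -/
noncomputable def slrPost (n p : ℕ) (X : Matrix (Fin n) (Fin p) ℝ) (D lam : ℝ)
    (Y : Fin n → ℝ) (SS : Set (Finset (Fin p))) (U : Set (Fin p → ℝ)) : ℝ :=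
  gpostP
    (fun S : Finset (Fin p) =>
      (if S.Nonempty ∧ 0 < gramDet (colSub X S) then 1 else 0) *
        Real.exp (-2 * D * S.card * Real.log (Real.exp 1 * p / S.card)) *
        ((Finset.univ.filter fun S' : Finset (Fin p) =>
            S'.card = S.card ∧ 0 < gramDet (colSub X S')).card : ℝ)⁻¹)
    (fun S => colSub X S) (fun S Q => sparseVec S Q) lam Y SS U

section part1

section basics
variable {ι : Type*} [Fintype ι]

lemma enr_eq_norm (v : ι → ℝ) : enr v = ‖WithLp.toLp 2 v‖ := by
  rw [EuclideanSpace.norm_eq]; simp [enr]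

lemma enr_nonneg (v : ι → ℝ) : 0 ≤ enr v := Real.sqrt_nonneg _

lemma enr_sq (v : ι → ℝ) : enr v ^ 2 = v ⬝ᵥ v := by
  rw [enr, Real.sq_sqrt (Finset.sum_nonneg fun i _ => sq_nonneg _)]
  simp [dotProduct, sq]

lemma enr_add_le (u v : ι → ℝ) : enr (u + v) ≤ enr u + enr v := by
  simp only [enr_eq_norm, WithLp.toLp_add]; exact norm_add_le _ _

lemma enr_smul (c : ℝ) (v : ι → ℝ) : enr (c • v) = |c| * enr v := by
  simp only [enr_eq_norm, WithLp.toLp_smul, norm_smul, Real.norm_eq_abs]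

lemma enr_neg (v : ι → ℝ) : enr (-v) = enr v := by
  simp only [enr_eq_norm, WithLp.toLp_neg, norm_neg]

lemma enr_le_add_sub (u v : ι → ℝ) : enr u ≤ enr v + enr (u - v) := by
  have := enr_add_le v (u - v); simpa using this

lemma abs_dot_le (u v : ι → ℝ) : |u ⬝ᵥ v| ≤ enr u * enr v := by
  apply abs_le_of_sq_le_sq
  · rw [mul_pow, enr_sq, enr_sq]
    have := Finset.sum_mul_sq_le_sq_mul_sq Finset.univ u v
    simpa [dotProduct, sq] using this
  · exact mul_nonneg (enr_nonneg _) (enr_nonneg _)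

lemma continuous_enr : Continuous (enr : (ι → ℝ) → ℝ) := by
  unfold enr; fun_prop

end basics

section gauss
set_option linter.unusedSectionVars false
variable {N κ : Type*} [Fintype N] [Fintype κ] [DecidableEq κ]

lemma gram_posDef (A : Matrix N κ ℝ) (h : 0 < gramDet A) : (Aᵀ * A).PosDef := by
  have h1 : (Aᵀ * A).PosSemidef := by
    have := Matrix.posSemidef_conjTranspose_mul_self A
    simpa using this
  exact h1.posDef_iff_isUnit.2 ((Matrix.isUnit_iff_isUnit_det _).2 (isUnit_iff_ne_zero.2 h.ne'))

lemma gauss_std (c : ℝ) : ∫ Q : κ → ℝ, Real.exp (-c * enr Q ^ 2) = √(π / c) ^ Fintype.card κ := by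
  rw [← integral_gaussian, ← integral_fintype_prod_volume_eq_pow]
  congr 1; ext Q
  rw [enr_sq, ← Real.exp_sum, dotProduct, Finset.mul_sum]
  simp [sq]

lemma enr_mulVec_sq {M κ : Type*} [Fintype M] [Fintype κ] (C : Matrix M κ ℝ) (Q : κ → ℝ) :
    enr (C *ᵥ Q) ^ 2 = Q ⬝ᵥ ((Cᵀ * C) *ᵥ Q) := by
  rw [enr_sq, ← Matrix.mulVec_mulVec, Matrix.dotProduct_mulVec Q, Matrix.vecMul_transpose]

open scoped MatrixOrder in
lemma gauss_int (A : Matrix N κ ℝ) (h : 0 < gramDet A) (c : ℝ) :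
    √(gramDet A) * ∫ Q : κ → ℝ, Real.exp (-c * enr (A *ᵥ Q) ^ 2) = √(π / c) ^ Fintype.card κ := by
  obtain ⟨B, hB⟩ : ∃ B : Matrix κ κ ℝ, Aᵀ * A = Bᵀ * B := by
    have h1 := (gram_posDef A h).posSemidef
    obtain ⟨B, hB⟩ := CStarAlgebra.nonneg_iff_eq_star_mul_self.mp h1.nonneg
    exact ⟨B, by simpa [Matrix.star_eq_conjTranspose] using hB⟩
  have hdet : gramDet A = B.det ^ 2 := by
    rw [gramDet, hB, det_mul, det_transpose, sq]
  have hB0 : B.det ≠ 0 := by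
    intro h0; rw [hdet, h0] at h; norm_num at h
  have hnorm : ∀ Q, enr (A *ᵥ Q) ^ 2 = enr (B *ᵥ Q) ^ 2 := by
    intro Q
    rw [enr_mulVec_sq, hB, ← enr_mulVec_sq]
  simp_rw [hnorm]
  rw [hdet, Real.sqrt_sq_eq_abs]
  have hmap := Real.map_matrix_volume_pi_eq_smul_volume_pi hB0
  have hint : ∫ Q : κ → ℝ, Real.exp (-c * enr Q ^ 2) ∂(Measure.map (toLin' B) volume)
     = ∫ Q : κ → ℝ, Real.exp (-c * enr (B *ᵥ Q) ^ 2) := by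
    rw [integral_map]
    · rfl
    · exact (LinearMap.continuous_of_finiteDimensional _).aemeasurable
    · have := @continuous_enr κ _
      exact Continuous.aestronglyMeasurable (by fun_prop)
  rw [← hint, hmap, integral_smul_measure, gauss_std, ENNReal.toReal_ofReal (abs_nonneg _), smul_eq_mul,
    ← mul_assoc, ← abs_mul, mul_inv_cancel₀ hB0]
  simp

lemma gauss_integrable (A : Matrix N κ ℝ) (h : 0 < gramDet A) {c : ℝ} (hc : 0 < c) :
    Integrable (fun Q : κ → ℝ => Real.exp (-c * enr (A *ᵥ Q) ^ 2)) := by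
  by_contra hn
  have := gauss_int A h c
  rw [integral_undef hn, mul_zero] at this
  have h2 : 0 < √(π / c) ^ Fintype.card κ := by positivity
  exact h2.ne this

lemma gauss_lint (A : Matrix N κ ℝ) (h : 0 < gramDet A) {c : ℝ} (hc : 0 < c) :
    ENNReal.ofReal (√(gramDet A)) * ∫⁻ Q : κ → ℝ, ENNReal.ofReal (Real.exp (-c * enr (A *ᵥ Q) ^ 2))
      = ENNReal.ofReal (√(π / c) ^ Fintype.card κ) := by
  rw [← ofReal_integral_eq_lintegral_ofReal (gauss_integrable A h hc)
    (Filter.Eventually.of_forall fun _ => (Real.exp_pos _).le), ← ENNReal.ofReal_mul (Real.sqrt_nonneg _),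
    gauss_int A h c]

end gauss

end part1

section part2

/-- Column `j`. -/
noncomputable def xcol {n p : ℕ} (X : Matrix (Fin n) (Fin p) ℝ) (j : Fin p) : Fin n → ℝ := fun i => X i j

lemma colSub_mulVec_insert {n p : ℕ} (X : Matrix (Fin n) (Fin p) ℝ) (R S : Finset (Fin p)) (j : Fin p)
    (hj : j ∉ R) (hS : S = insert j R) (hjS : j ∈ S) (hRS : R ⊆ S) (Q : ↥S → ℝ) :
    colSub X S *ᵥ Q = colSub X R *ᵥ (fun k => Q ⟨k.1, hRS k.2⟩) + Q ⟨j, hjS⟩ • xcol X j := by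
  subst hS
  ext i
  simp only [mulVec, dotProduct, colSub, Pi.add_apply, Pi.smul_apply, xcol, smul_eq_mul]
  have h1 : ∀ (T : Finset (Fin p)) (Q : ↥T → ℝ), ∑ x : ↥T, X i x * Q x = ∑ x ∈ T, if h : x ∈ T then X i x * Q ⟨x, h⟩ else 0 := by
    intro T Q
    rw [← Finset.sum_coe_sort T]
    apply Finset.sum_congr rfl
    intro x _
    simp
  rw [h1, Finset.sum_insert hj, h1 R, add_comm]
  congr 1
  · apply Finset.sum_congr rfl
    intro x hx
    simp [hx]
  · simp [mul_comm]

lemma shear0 {n p : ℕ} (X : Matrix (Fin n) (Fin p) ℝ) (R S : Finset (Fin p)) (j : Fin p)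
    (hj : j ∉ R) (hS : S = insert j R) (hjS : j ∈ S)
    (F : ℝ → (Fin n → ℝ) → ℝ≥0∞) (hF : Measurable (Function.uncurry F)) :
    ∫⁻ Q : ↥S → ℝ, F (Q ⟨j, hjS⟩) (colSub X S *ᵥ Q) =
      ∫⁻ q : ↥R → ℝ, ∫⁻ t : ℝ, F t (colSub X R *ᵥ q + t • xcol X j) := by
  subst hS
  have hRS : R ⊆ insert j R := Finset.subset_insert j R
  have m1 : MeasurePreserving (MeasurableEquiv.piOptionEquivProd (fun _ : Option ↥R => ℝ)).symm
     ((volume : Measure (↥R → ℝ)).prod volume) volume :=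
    ⟨MeasurableEquiv.measurable _, Measure.pi_map_piOptionEquivProd (fun _ : Option ↥R => (volume : Measure ℝ))⟩
  have m2 := volume_preserving_arrowCongr' (Finset.subtypeInsertEquivOption hj).symm (MeasurableEquiv.refl ℝ)
    (MeasurePreserving.id volume)
  have m3 := m2.comp m1
  have hmeas : Measurable fun Q : ↥(insert j R) → ℝ => F (Q ⟨j, hjS⟩) (colSub X (insert j R) *ᵥ Q) := by
    have : Measurable fun Q : ↥(insert j R) → ℝ => (Q ⟨j, hjS⟩, colSub X (insert j R) *ᵥ Q) := by
      refine Measurable.prodMk (measurable_pi_apply _) ?_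
      exact Continuous.measurable (by fun_prop)
    exact hF.comp this
  rw [← m3.lintegral_comp hmeas, lintegral_prod]
  · refine lintegral_congr fun q => lintegral_congr fun t => ?_
    rw [colSub_mulVec_insert X R _ j hj rfl hjS hRS]
    have e1 : ((⇑(MeasurableEquiv.arrowCongr' (Finset.subtypeInsertEquivOption hj).symm (MeasurableEquiv.refl ℝ)) ∘
        ⇑(MeasurableEquiv.piOptionEquivProd fun _ : Option ↥R => ℝ).symm) (q, t)) ⟨j, hjS⟩ = t := by
      simp [MeasurableEquiv.arrowCongr', Equiv.arrowCongr', MeasurableEquiv.piOptionEquivProd, Finset.subtypeInsertEquivOption]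
      rfl
    have e2 : (fun k : ↥R => ((⇑(MeasurableEquiv.arrowCongr' (Finset.subtypeInsertEquivOption hj).symm (MeasurableEquiv.refl ℝ)) ∘
        ⇑(MeasurableEquiv.piOptionEquivProd fun _ : Option ↥R => ℝ).symm) (q, t)) ⟨k.1, hRS k.2⟩) = q := by
      ext k
      have : k.1 ≠ j := fun h => hj (h ▸ k.2)
      simp [MeasurableEquiv.arrowCongr', Equiv.arrowCongr', MeasurableEquiv.piOptionEquivProd, Finset.subtypeInsertEquivOption, this]
      rfl
    rw [e1, e2]
  · exact (hmeas.comp m3.measurable).aemeasurable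

lemma shear {n p : ℕ} (X : Matrix (Fin n) (Fin p) ℝ) (R S : Finset (Fin p)) (j : Fin p)
    (hj : j ∉ R) (hS : S = insert j R) (hjS : j ∈ S) (a : ↥R → ℝ)
    (F : ℝ → (Fin n → ℝ) → ℝ≥0∞) (hF : Measurable (Function.uncurry F)) :
    ∫⁻ Q : ↥S → ℝ, F (Q ⟨j, hjS⟩) (colSub X S *ᵥ Q) =
      ∫⁻ q : ↥R → ℝ, ∫⁻ t : ℝ, F t (colSub X R *ᵥ q + t • (xcol X j - colSub X R *ᵥ a)) := by
  rw [shear0 X R S j hj hS hjS F hF, lintegral_lintegral_swap]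
  on_goal 1 => symm; rw [lintegral_lintegral_swap]
  · refine lintegral_congr fun t => ?_
    symm; rw [← lintegral_sub_right_eq_self _ (t • a)]
    refine lintegral_congr fun q => ?_
    congr 1
    rw [mulVec_sub, mulVec_smul]
    module
  · refine (hF.comp (f := fun z : (↥R → ℝ) × ℝ => (z.2, colSub X R *ᵥ z.1 + z.2 • (xcol X j - colSub X R *ᵥ a))) ?_).aemeasurable
    exact Continuous.measurable (by fun_prop)
  · refine (hF.comp (f := fun z : (↥R → ℝ) × ℝ => (z.2, colSub X R *ᵥ z.1 + z.2 • xcol X j)) ?_).aemeasurable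
    exact Continuous.measurable (by fun_prop)

end part2

section part3

/-- Unnormalized posterior density as a function of the mean. -/
noncomputable def gf {n : ℕ} (Y : Fin n → ℝ) (lam : ℝ) (u : Fin n → ℝ) : ℝ :=
  Real.exp (-(1/2) * (enr fun t => Y t - u t) ^ 2 - lam * enr u)

lemma gf_pos {n : ℕ} (Y : Fin n → ℝ) (lam : ℝ) (u : Fin n → ℝ) : 0 < gf Y lam u := Real.exp_pos _

lemma continuous_gf {n : ℕ} (Y : Fin n → ℝ) (lam : ℝ) : Continuous (gf Y lam) := by
  unfold gf
  have := @continuous_enr (Fin n) _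
  have h2 : Continuous fun u : Fin n → ℝ => enr fun t => Y t - u t := this.comp (by fun_prop)
  fun_prop

lemma gf_eq {n : ℕ} (Y u r : Fin n → ℝ) (lam t : ℝ) (hur : u ⬝ᵥ r = 0) (hr : 0 < r ⬝ᵥ r) :
    gf Y lam (u + t • r) = Real.exp (-(1/2) * (enr (Y - u) ^ 2 - (r ⬝ᵥ r) * ((Y ⬝ᵥ r) / (r ⬝ᵥ r)) ^ 2
      + (r ⬝ᵥ r) * (t - (Y ⬝ᵥ r) / (r ⬝ᵥ r)) ^ 2) - lam * enr (u + t • r)) := by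
  have h1 : enr (fun i => Y i - (u + t • r) i) ^ 2 = enr (Y - u) ^ 2 - 2 * t * (Y ⬝ᵥ r) + t ^ 2 * (r ⬝ᵥ r) := by
    have : (fun i => Y i - (u + t • r) i) = (Y - u) - t • r := by ext i; simp; ring
    rw [this, enr_sq, enr_sq]
    simp only [sub_dotProduct, dotProduct_sub, smul_dotProduct, dotProduct_smul, smul_eq_mul, hur,
      dotProduct_comm r Y, dotProduct_comm r u]
    ring
  rw [gf, h1]
  congr 3
  field_simp
  ring

lemma lint_gauss1 (b t0 : ℝ) (hb : 0 < b) :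
    ∫⁻ t : ℝ, ENNReal.ofReal (Real.exp (-b * (t - t0) ^ 2)) = ENNReal.ofReal √(π / b) := by
  rw [lintegral_sub_right_eq_self (fun t => ENNReal.ofReal (Real.exp (-b * t ^ 2))) t0,
    ← integral_gaussian, ofReal_integral_eq_lintegral_ofReal (integrable_exp_neg_mul_sq hb)
    (Filter.Eventually.of_forall fun _ => (Real.exp_pos _).le)]

lemma enr_shift {n : ℕ} (u r : Fin n → ℝ) (t s : ℝ) :
    enr (u + t • r) ≤ enr (u + s • r) + |t - s| * enr r := by
  have : u + t • r = (u + s • r) + (t - s) • r := by module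
  rw [this, ← enr_smul]
  exact enr_add_le _ _

lemma oneD_C {n : ℕ} (Y u r : Fin n → ℝ) (lam : ℝ) (hur : u ⬝ᵥ r = 0) (hr : 0 < r ⬝ᵥ r)
    (hl : 0 < lam) (B : Set ℝ) (hB : MeasurableSet B) (ρ0 : ℝ)
    (hρ : ∀ t ∈ B, ρ0 ≤ (r ⬝ᵥ r) * (t - (Y ⬝ᵥ r) / (r ⬝ᵥ r)) ^ 2) :
    ∫⁻ t in B, ENNReal.ofReal (gf Y lam (u + t • r)) ≤
      ENNReal.ofReal (√8 * Real.exp (3 / 2 * lam ^ 2 - ρ0 / 8)) *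
        ∫⁻ t : ℝ, ENNReal.ofReal (gf Y lam (u + t • r)) := by
  set t0 := (Y ⬝ᵥ r) / (r ⬝ᵥ r) with ht0
  set rr := r ⬝ᵥ r with hrr
  set Kc := Real.exp (-(1/2) * (enr (Y - u) ^ 2 - rr * t0 ^ 2) - lam * enr (u + t0 • r)) with hKc
  have her : enr r ^ 2 = rr := enr_sq r
  have hen := enr_nonneg r
  have sqx : ∀ t, (|t - t0| * enr r) ^ 2 = rr * (t - t0) ^ 2 := by
    intro t; rw [mul_pow, sq_abs, her]; ring
  have up : ∀ t ∈ B, gf Y lam (u + t • r) ≤ (Kc * Real.exp (lam ^ 2 - ρ0 / 8)) * Real.exp (-(rr / 8) * (t - t0) ^ 2) := by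
    intro t ht
    rw [gf_eq Y u r lam t hur hr, hKc, ← Real.exp_add, ← Real.exp_add]
    apply Real.exp_le_exp.2
    have h1 := enr_shift u r t0 t
    rw [abs_sub_comm] at h1
    have h2 := hρ t ht
    have h3 := sqx t
    set x := |t - t0| * enr r
    nlinarith [sq_nonneg (x - 2 * lam), mul_le_mul_of_nonneg_left h1 hl.le]
  have lo : ∀ t, (Kc * Real.exp (-lam ^ 2 / 2)) * Real.exp (-rr * (t - t0) ^ 2) ≤ gf Y lam (u + t • r) := by
    intro t
    rw [gf_eq Y u r lam t hur hr, hKc, ← Real.exp_add, ← Real.exp_add]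
    apply Real.exp_le_exp.2
    have h1 := enr_shift u r t t0
    have h3 := sqx t
    set x := |t - t0| * enr r
    nlinarith [sq_nonneg (x - lam), mul_le_mul_of_nonneg_left h1 hl.le]
  have hK0 : 0 < Kc := Real.exp_pos _
  calc ∫⁻ t in B, ENNReal.ofReal (gf Y lam (u + t • r))
      ≤ ∫⁻ t in B, ENNReal.ofReal (Kc * Real.exp (lam ^ 2 - ρ0 / 8)) * ENNReal.ofReal (Real.exp (-(rr / 8) * (t - t0) ^ 2)) := by
        refine setLIntegral_mono' hB fun t ht => ?_
        rw [← ENNReal.ofReal_mul (by positivity)]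
        exact ENNReal.ofReal_le_ofReal (up t ht)
    _ ≤ ∫⁻ t, ENNReal.ofReal (Kc * Real.exp (lam ^ 2 - ρ0 / 8)) * ENNReal.ofReal (Real.exp (-(rr / 8) * (t - t0) ^ 2)) :=
        setLIntegral_le_lintegral _ _
    _ = ENNReal.ofReal (√8 * Real.exp (3 / 2 * lam ^ 2 - ρ0 / 8)) *
        ∫⁻ t, ENNReal.ofReal (Kc * Real.exp (-lam ^ 2 / 2)) * ENNReal.ofReal (Real.exp (-rr * (t - t0) ^ 2)) := by
        rw [lintegral_const_mul' _ _ ENNReal.ofReal_ne_top, lintegral_const_mul' _ _ ENNReal.ofReal_ne_top,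
          lint_gauss1 _ _ (by positivity), lint_gauss1 _ _ hr, ← ENNReal.ofReal_mul (by positivity),
          ← ENNReal.ofReal_mul (by positivity), ← ENNReal.ofReal_mul (by positivity)]
        congr 1
        have e1 : √(π / (rr / 8)) = √8 * √(π / rr) := by
          rw [← Real.sqrt_mul (by norm_num)]; congr 1; field_simp
        have e2 : Real.exp (lam ^ 2 - ρ0 / 8) = Real.exp (3 / 2 * lam ^ 2 - ρ0 / 8) * Real.exp (-lam ^ 2 / 2) := by
          rw [← Real.exp_add]; congr 1; ring
        rw [e1, e2]; ring
    _ ≤ _ := by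
        gcongr with t
        rw [← ENNReal.ofReal_mul (by positivity)]
        exact ENNReal.ofReal_le_ofReal (lo t)

lemma oneD_B {n : ℕ} (Y u r : Fin n → ℝ) (lam : ℝ) (hur : u ⬝ᵥ r = 0) (hr : 0 < r ⬝ᵥ r)
    (hl : 0 < lam) :
    ENNReal.ofReal (gf Y lam u) ≤
      ENNReal.ofReal (√(r ⬝ᵥ r) / √π * Real.exp (3 / 2 * lam ^ 2 - (Y ⬝ᵥ r) ^ 2 / (r ⬝ᵥ r) / 4)) *
        ∫⁻ t : ℝ, ENNReal.ofReal (gf Y lam (u + t • r)) := by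
  set t0 := (Y ⬝ᵥ r) / (r ⬝ᵥ r) with ht0
  set rr := r ⬝ᵥ r with hrr
  have her : enr r ^ 2 = rr := enr_sq r
  have hy : (Y ⬝ᵥ r) ^ 2 / rr = rr * t0 ^ 2 := by rw [ht0]; field_simp
  have hen := enr_nonneg r
  have sqx : ∀ t, (|t| * enr r) ^ 2 = rr * t ^ 2 := by
    intro t; rw [mul_pow, sq_abs, her]; ring
  have lo : ∀ t, (gf Y lam u * Real.exp (rr * t0 ^ 2 / 4 - 3 / 2 * lam ^ 2)) * Real.exp (-rr * (t - t0) ^ 2) ≤ gf Y lam (u + t • r) := by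
    intro t
    have hu0 := gf_eq Y u r lam 0 hur hr
    rw [zero_smul, add_zero, ← ht0, ← hrr] at hu0
    rw [gf_eq Y u r lam t hur hr, hu0, ← Real.exp_add, ← Real.exp_add]
    apply Real.exp_le_exp.2
    have h1 := enr_shift u r t t0
    have h1' := enr_shift u r t0 0
    rw [zero_smul, add_zero, sub_zero] at h1'
    have h3 := sqx (t - t0)
    have h3' := sqx t0
    set x := |t - t0| * enr r
    set y := |t0| * enr r
    nlinarith [sq_nonneg (x - lam), sq_nonneg (y - 2 * lam), mul_le_mul_of_nonneg_left h1 hl.le, mul_le_mul_of_nonneg_left h1' hl.le]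
  have hg := gf_pos Y lam u
  calc ENNReal.ofReal (gf Y lam u) = ENNReal.ofReal (√rr / √π * Real.exp (3 / 2 * lam ^ 2 - (Y ⬝ᵥ r) ^ 2 / rr / 4)) *
        ∫⁻ t, ENNReal.ofReal (gf Y lam u * Real.exp (rr * t0 ^ 2 / 4 - 3 / 2 * lam ^ 2)) * ENNReal.ofReal (Real.exp (-rr * (t - t0) ^ 2)) := by
        rw [lintegral_const_mul' _ _ ENNReal.ofReal_ne_top,
          lint_gauss1 _ _ hr, ← ENNReal.ofReal_mul (by positivity),
          ← ENNReal.ofReal_mul (by positivity)]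
        congr 1
        rw [hy, Real.sqrt_div Real.pi_pos.le]
        have h1 : √rr ≠ 0 := (Real.sqrt_pos.2 hr).ne'
        have h2 : √π ≠ 0 := (Real.sqrt_pos.2 Real.pi_pos).ne'
        have e2 : Real.exp (rr * t0 ^ 2 / 4 - 3 / 2 * lam ^ 2) = (Real.exp (3 / 2 * lam ^ 2 - rr * t0 ^ 2 / 4))⁻¹ := by
          rw [← Real.exp_neg]; congr 1; ring
        have h3 := (Real.exp_pos (3 / 2 * lam ^ 2 - rr * t0 ^ 2 / 4)).ne'
        rw [e2]; field_simp
    _ ≤ _ := by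
        gcongr with t
        rw [← ENNReal.ofReal_mul (by positivity)]
        exact ENNReal.ofReal_le_ofReal (lo t)

section gram
variable {N κ : Type*} [Fintype N] [Fintype κ] [DecidableEq κ]

lemma gram_pos_of_inj (A : Matrix N κ ℝ) (h : ∀ Q, A *ᵥ Q = 0 → Q = 0) : 0 < gramDet A := by
  have := Matrix.PosDef.conjTranspose_mul_self A (fun a b hab => by
    have := h (a - b) (by rw [mulVec_sub]; exact sub_eq_zero.2 hab)
    exact sub_eq_zero.1 this)
  have h2 := this.det_pos
  simpa [gramDet] using h2

lemma inj_of_gram_pos (A : Matrix N κ ℝ) (h : 0 < gramDet A) (Q : κ → ℝ) (hQ : A *ᵥ Q = 0) : Q = 0 := by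
  have h1 : (Aᵀ * A) *ᵥ Q = 0 := by rw [← mulVec_mulVec, hQ, mulVec_zero]
  exact Matrix.eq_zero_of_mulVec_eq_zero h.ne' h1

end gram

lemma gram_insert {n p : ℕ} (X : Matrix (Fin n) (Fin p) ℝ) (R S : Finset (Fin p)) (j : Fin p)
    (hj : j ∉ R) (hS : S = insert j R) (a : ↥R → ℝ)
    (hR : 0 < gramDet (colSub X R)) (r : Fin n → ℝ) (hr : r = xcol X j - colSub X R *ᵥ a)
    (ho : ∀ q, (colSub X R *ᵥ q) ⬝ᵥ r = 0) (hrr : 0 < r ⬝ᵥ r) :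
    0 < gramDet (colSub X S) ∧ √(gramDet (colSub X S)) = √(r ⬝ᵥ r) * √(gramDet (colSub X R)) := by
  have hjS : j ∈ S := by simp [hS]
  have hRS : R ⊆ S := by simp [hS]
  have hpos : 0 < gramDet (colSub X S) := by
    apply gram_pos_of_inj
    intro Q hQ
    rw [colSub_mulVec_insert X R S j hj hS hjS hRS] at hQ
    have e : xcol X j = r + colSub X R *ᵥ a := by rw [hr]; abel
    have hd : (colSub X R *ᵥ (fun k => Q ⟨k.1, hRS k.2⟩) + Q ⟨j, hjS⟩ • xcol X j) ⬝ᵥ r = 0 := by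
      rw [hQ, zero_dotProduct]
    rw [e, add_dotProduct, ho, smul_dotProduct, add_dotProduct, ho, smul_eq_mul] at hd
    have ht : Q ⟨j, hjS⟩ = 0 := by
      rcases mul_eq_zero.1 (show Q ⟨j, hjS⟩ * (r ⬝ᵥ r) = 0 by simpa using hd) with h | h
      · exact h
      · exact absurd h hrr.ne'
    rw [ht, zero_smul, add_zero] at hQ
    have hq := inj_of_gram_pos _ hR _ hQ
    ext ⟨k, hk⟩
    have hk' := hk
    rw [hS, Finset.mem_insert] at hk'
    rcases hk' with h | h
    · subst h; exact ht
    · exact congrFun hq ⟨k, h⟩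
  refine ⟨hpos, ?_⟩
  have g1 := gauss_lint (colSub X S) hpos one_pos
  have g2 := gauss_lint (colSub X R) hR one_pos
  have sh := shear X R S j hj hS hjS a (fun _ u => ENNReal.ofReal (Real.exp (-1 * enr u ^ 2))) (by
    apply ENNReal.measurable_ofReal.comp
    have := @continuous_enr (Fin n) _
    exact Continuous.measurable (by fun_prop))
  rw [← hr] at sh
  have sh2 : ∀ q : ↥R → ℝ, ∫⁻ t : ℝ, ENNReal.ofReal (Real.exp (-1 * enr (colSub X R *ᵥ q + t • r) ^ 2))
      = ENNReal.ofReal (√(π / (r ⬝ᵥ r))) * ENNReal.ofReal (Real.exp (-1 * enr (colSub X R *ᵥ q) ^ 2)) := by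
    intro q
    rw [← lint_gauss1 _ 0 hrr, ← lintegral_mul_const' _ _ ENNReal.ofReal_ne_top]
    refine lintegral_congr fun t => ?_
    rw [← ENNReal.ofReal_mul (Real.exp_pos _).le, ← Real.exp_add]
    congr 2
    rw [enr_sq, enr_sq]
    simp only [add_dotProduct, dotProduct_add, smul_dotProduct, dotProduct_smul, smul_eq_mul, ho,
      dotProduct_comm r (colSub X R *ᵥ q)]
    ring
  simp only [sh2] at sh
  rw [lintegral_const_mul' _ _ ENNReal.ofReal_ne_top] at sh
  rw [sh] at g1
  have hI : ∫⁻ q : ↥R → ℝ, ENNReal.ofReal (Real.exp (-1 * enr (colSub X R *ᵥ q) ^ 2)) ≠ ⊤ := by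
    intro h
    rw [h, ENNReal.mul_top (by simpa using Real.sqrt_pos.2 hR)] at g2
    exact ENNReal.ofReal_ne_top g2.symm
  set I := ∫⁻ q : ↥R → ℝ, ENNReal.ofReal (Real.exp (-1 * enr (colSub X R *ᵥ q) ^ 2))
  have g1' := congrArg ENNReal.toReal g1
  have g2' := congrArg ENNReal.toReal g2
  simp only [ENNReal.toReal_mul] at g1' g2'
  rw [ENNReal.toReal_ofReal (by positivity), ENNReal.toReal_ofReal (by positivity), ENNReal.toReal_ofReal (by positivity)] at g1'
  rw [ENNReal.toReal_ofReal (by positivity), ENNReal.toReal_ofReal (by positivity)] at g2'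
  have hc : Fintype.card ↥S = Fintype.card ↥R + 1 := by
    rw [Fintype.card_coe, Fintype.card_coe, hS, Finset.card_insert_of_notMem hj]
  rw [hc, pow_succ, ← g2', div_one, Real.sqrt_div Real.pi_pos.le] at g1'
  have h1 : √(r ⬝ᵥ r) ≠ 0 := (Real.sqrt_pos.2 hrr).ne'
  have h2 : √π ≠ 0 := (Real.sqrt_pos.2 Real.pi_pos).ne'
  have h3 : I.toReal ≠ 0 := by
    intro h
    rw [h, mul_zero] at g2'
    have : 0 < √(π / 1) ^ Fintype.card ↥R := by positivity
    exact this.ne g2'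
  field_simp at g1'
  linarith

end part3

section part4

section geom
variable {n p : ℕ} (X : Matrix (Fin n) (Fin p) ℝ)

lemma colSub_mulVec_sum (R : Finset (Fin p)) (q : ↥R → ℝ) :
    colSub X R *ᵥ q = ∑ k : ↥R, q k • xcol X k := by
  ext i
  simp [mulVec, dotProduct, colSub, xcol, mul_comm]

lemma mulVec_sum (β : Fin p → ℝ) : X *ᵥ β = ∑ k, β k • xcol X k := by
  ext i
  simp [mulVec, dotProduct, xcol, mul_comm]

lemma coh_inj (τ : ℝ) (hn : 0 < (n : ℝ)) (h1 : ∀ j, xcol X j ⬝ᵥ xcol X j = n)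
    (h2 : ∀ j l, j ≠ l → |xcol X j ⬝ᵥ xcol X l| ≤ n * τ) (S : Finset (Fin p))
    (hS : ((S.card : ℝ) - 1) * τ < 1) (a : ↥S → ℝ) (ha : colSub X S *ᵥ a = 0) : a = 0 := by
  have key : ∀ k : ↥S, |a k| ≤ τ * (∑ l, |a l| - |a k|) := by
    intro k
    have e : xcol X k ⬝ᵥ (colSub X S *ᵥ a) = 0 := by rw [ha, dotProduct_zero]
    rw [colSub_mulVec_sum, dotProduct_sum, ← Finset.add_sum_erase _ _ (Finset.mem_univ k)] at e
    simp only [dotProduct_smul, smul_eq_mul, h1] at e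
    have e2 : |∑ l ∈ Finset.univ.erase k, a l * (xcol X k ⬝ᵥ xcol X l)| ≤ n * τ * (∑ l, |a l| - |a k|) := by
      rw [← Finset.add_sum_erase _ (fun l => |a l|) (Finset.mem_univ k), add_sub_cancel_left, Finset.mul_sum]
      refine (Finset.abs_sum_le_sum_abs _ _).trans (Finset.sum_le_sum fun l hl => ?_)
      rw [abs_mul, mul_comm]
      have := h2 k l (fun h => (Finset.ne_of_mem_erase hl) (Subtype.ext h.symm))
      gcongr
    have e3 : (n : ℝ) * |a k| ≤ n * (τ * (∑ l, |a l| - |a k|)) := by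
      rw [← mul_assoc, ← abs_of_pos hn, ← abs_mul, abs_of_pos hn, mul_comm (n : ℝ) (a k), eq_neg_of_add_eq_zero_left e, abs_neg]
      exact e2
    exact le_of_mul_le_mul_left e3 hn
  have hs := Finset.sum_le_sum fun k (_ : k ∈ Finset.univ) => key k
  rw [← Finset.mul_sum, Finset.sum_sub_distrib, Finset.sum_const, Finset.card_univ, Fintype.card_coe, nsmul_eq_mul] at hs
  set T := ∑ l, |a l| with hT
  have hT0 : 0 ≤ T := Finset.sum_nonneg fun _ _ => abs_nonneg _
  have : T = 0 := by
    by_contra hne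
    have : 0 < T := lt_of_le_of_ne hT0 (Ne.symm hne)
    nlinarith
  ext k
  have := (Finset.sum_eq_zero_iff_of_nonneg fun _ _ => abs_nonneg _).1 this k (Finset.mem_univ k)
  simpa using this

lemma geom (τ : ℝ) (hτ : 0 < τ) (hn : 0 < (n : ℝ)) (h1 : ∀ j, xcol X j ⬝ᵥ xcol X j = n)
    (h2 : ∀ j l, j ≠ l → |xcol X j ⬝ᵥ xcol X l| ≤ n * τ) (R : Finset (Fin p)) (j : Fin p)
    (hj : j ∉ R) (hR : 0 < gramDet (colSub X R)) (hc : (R.card : ℝ) * τ ≤ 2 / 9) :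
    ∃ a : ↥R → ℝ, ∃ r : Fin n → ℝ, r = xcol X j - colSub X R *ᵥ a ∧
      (∀ q, (colSub X R *ᵥ q) ⬝ᵥ r = 0) ∧ n / 2 ≤ r ⬝ᵥ r ∧ r ⬝ᵥ r ≤ 2 * n ∧
      xcol X j ⬝ᵥ r = r ⬝ᵥ r ∧ (∀ k ∈ R, xcol X k ⬝ᵥ r = 0) ∧
      (∀ w B, (∀ k, |xcol X k ⬝ᵥ w| ≤ B) → |w ⬝ᵥ r| ≤ 2 * B) ∧
      (∀ k, k ∉ R → k ≠ j → |xcol X k ⬝ᵥ r| ≤ 9 / 7 * (n * τ)) := by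
  set A := colSub X R with hA
  set a : ↥R → ℝ := (Aᵀ * A)⁻¹ *ᵥ (Aᵀ *ᵥ xcol X j) with ha
  have hAr : Aᵀ *ᵥ (xcol X j - A *ᵥ a) = 0 := by
    rw [mulVec_sub, ha, mulVec_mulVec, mulVec_mulVec, Matrix.mul_nonsing_inv _ (isUnit_iff_ne_zero.2 hR.ne'), one_mulVec, sub_self]
  have ho : ∀ q, (A *ᵥ q) ⬝ᵥ (xcol X j - A *ᵥ a) = 0 := by
    intro q
    rw [← vecMul_transpose, ← dotProduct_mulVec, hAr, dotProduct_zero]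
  set r := xcol X j - A *ᵥ a with hr
  have hok : ∀ k ∈ R, xcol X k ⬝ᵥ r = 0 := by
    intro k hk
    have := ho (Pi.single ⟨k, hk⟩ 1)
    rw [mulVec_single_one] at this
    exact this
  have hdot : ∀ w, w ⬝ᵥ r = w ⬝ᵥ xcol X j - ∑ l : ↥R, a l * (w ⬝ᵥ xcol X l) := by
    intro w
    rw [hr, dotProduct_sub, hA, colSub_mulVec_sum, dotProduct_sum]
    simp only [dotProduct_smul, smul_eq_mul]
  set T := ∑ l, |a l| with hT
  have hT0 : 0 ≤ T := Finset.sum_nonneg fun _ _ => abs_nonneg _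
  have hsum : ∀ (w : Fin n → ℝ) B, 0 ≤ B → (∀ l ∈ R, |w ⬝ᵥ xcol X l| ≤ B) → |∑ l : ↥R, a l * (w ⬝ᵥ xcol X l)| ≤ T * B := by
    intro w B hB h
    rw [hT, Finset.sum_mul]
    refine (Finset.abs_sum_le_sum_abs _ _).trans (Finset.sum_le_sum fun l _ => ?_)
    rw [abs_mul]
    have := h l l.2
    gcongr
  have key : ∀ k : ↥R, |a k| ≤ τ * (1 + T) := by
    intro k
    have e := hok k k.2
    rw [hdot, ← Finset.add_sum_erase _ _ (Finset.mem_univ k), h1] at e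
    have e2 : |∑ l ∈ Finset.univ.erase k, a l * (xcol X k ⬝ᵥ xcol X l)| ≤ n * τ * T := by
      have : n * τ * T = ∑ l, n * τ * |a l| := by rw [hT, Finset.mul_sum]
      rw [this]
      refine (Finset.abs_sum_le_sum_abs _ _).trans
        ((Finset.sum_le_sum fun l hl => ?_).trans (Finset.sum_le_sum_of_subset_of_nonneg (Finset.erase_subset _ _) fun _ _ _ => by positivity))
      rw [abs_mul, mul_comm]
      have := h2 k l (fun h => (Finset.ne_of_mem_erase hl) (Subtype.ext h.symm))
      gcongr
    have e4 := h2 k j (fun h => hj (h ▸ k.2))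
    have e5 : a k * n = xcol X k ⬝ᵥ xcol X j - ∑ l ∈ Finset.univ.erase k, a l * (xcol X k ⬝ᵥ xcol X l) := by linarith
    have e3 : (n : ℝ) * |a k| ≤ n * (τ * (1 + T)) := by
      have : (n : ℝ) * |a k| = |a k * n| := by rw [abs_mul, abs_of_pos hn, mul_comm]
      rw [this, e5]
      refine (abs_sub _ _).trans ?_
      linarith
    exact le_of_mul_le_mul_left e3 hn
  have hs := Finset.sum_le_sum fun k (_ : k ∈ Finset.univ) => key k
  rw [Finset.sum_const, Finset.card_univ, Fintype.card_coe, nsmul_eq_mul, ← hT] at hs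
  have hT1 : T ≤ 2 / 7 := by nlinarith
  have hT2 : T * τ ≤ 1 / 2 := by
    rcases R.eq_empty_or_nonempty with h | h
    · have : (R.card : ℝ) = 0 := by simp [h]
      rw [this] at hs
      have : T = 0 := by linarith
      rw [this]; norm_num
    · have h3 : (1 : ℝ) ≤ R.card := by exact_mod_cast h.card_pos
      have : τ ≤ 2 / 9 := by nlinarith
      nlinarith
  have hxr : xcol X j ⬝ᵥ r = r ⬝ᵥ r := by
    conv_rhs => rw [hr, sub_dotProduct, ← hr, ho, sub_zero]
  have hxj : |xcol X j ⬝ᵥ r - n| ≤ n / 2 := by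
    rw [hdot, h1, sub_sub_cancel_left, abs_neg]
    refine (hsum _ (n * τ) (by positivity) fun l hl => h2 j l (fun h => hj (h ▸ hl))).trans ?_
    nlinarith
  rw [abs_le] at hxj
  refine ⟨a, r, rfl, ho, by linarith, by linarith, hxr, hok, ?_, ?_⟩
  · intro w B hB
    have hB0 : 0 ≤ B := (abs_nonneg _).trans (hB j)
    rw [hdot]
    refine (abs_sub _ _).trans ?_
    have e1 := hsum w B hB0 (fun l _ => by rw [dotProduct_comm]; exact hB l)
    have e2 := hB j
    rw [dotProduct_comm] at e2
    nlinarith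
  · intro k hk hkj
    rw [hdot]
    refine (abs_sub _ _).trans ?_
    have e1 := hsum (xcol X k) (n * τ) (by positivity) (fun l hl => h2 k l (fun h => hk (h ▸ hl)))
    have e2 := h2 k j hkj
    have : 0 < n * τ := by positivity
    nlinarith

lemma hbound (τ : ℝ) (hτ : 0 < τ) (hn : 0 < (n : ℝ)) (R : Finset (Fin p)) (j : Fin p)
    (hj : j ∉ R) (r W : Fin n → ℝ) (β : Fin p → ℝ) (B m : ℝ) (hm : 0 ≤ m)
    (hxr : xcol X j ⬝ᵥ r = r ⬝ᵥ r) (hok : ∀ k ∈ R, xcol X k ⬝ᵥ r = 0)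
    (hw : |W ⬝ᵥ r| ≤ 2 * B)
    (hk : ∀ k, k ∉ R → k ≠ j → |xcol X k ⬝ᵥ r| ≤ 9 / 7 * (n * τ))
    (hmk : ∀ k, k ∉ R → k ≠ j → |β k| ≤ m)
    (hs : τ * ((Finset.univ.filter fun j => β j ≠ 0).card : ℝ) ≤ 1 / 9) :
    |(X *ᵥ β + W) ⬝ᵥ r - β j * (r ⬝ᵥ r)| ≤ n / 7 * m + 2 * B := by
  have e : (X *ᵥ β + W) ⬝ᵥ r - β j * (r ⬝ᵥ r) = ∑ k ∈ Finset.univ.erase j, β k * (xcol X k ⬝ᵥ r) + W ⬝ᵥ r := by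
    rw [add_dotProduct, mulVec_sum, sum_dotProduct, ← Finset.add_sum_erase _ _ (Finset.mem_univ j)]
    simp only [smul_dotProduct, smul_eq_mul, hxr]
    ring
  rw [e]
  refine (abs_add_le _ _).trans (add_le_add ?_ hw)
  calc |∑ k ∈ Finset.univ.erase j, β k * (xcol X k ⬝ᵥ r)|
      ≤ ∑ k ∈ Finset.univ.erase j, |β k * (xcol X k ⬝ᵥ r)| := Finset.abs_sum_le_sum_abs _ _
    _ ≤ ∑ k ∈ Finset.univ.erase j, (if β k ≠ 0 then m * (9 / 7 * (n * τ)) else 0) := by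
        refine Finset.sum_le_sum fun k hk' => ?_
        split_ifs with h
        · by_cases hkR : k ∈ R
          · rw [hok k hkR]; simp; positivity
          · rw [abs_mul]
            have hkj := Finset.ne_of_mem_erase hk'
            have a1 := hk k hkR hkj
            have a2 := hmk k hkR hkj
            gcongr
        · push Not at h; simp [h]
    _ ≤ ∑ k, (if β k ≠ 0 then m * (9 / 7 * (n * τ)) else 0) :=
        Finset.sum_le_sum_of_subset_of_nonneg (Finset.erase_subset _ _) fun _ _ _ => by split_ifs <;> positivity
    _ = (Finset.univ.filter fun j => β j ≠ 0).card * (m * (9 / 7 * (n * τ))) := by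
        rw [← Finset.sum_filter, Finset.sum_const, nsmul_eq_mul]
    _ ≤ n / 7 * m := by
        have : 0 ≤ m * n := by positivity
        nlinarith
end geom

end part4

section part5

/-- Complexity function. -/
noncomputable def psi (p s : ℕ) : ℝ := s * Real.log (Real.exp 1 * p / s)

section psi
variable {p : ℕ}

lemma log_ge_one {s : ℕ} (hs : 1 ≤ s) (hsp : s ≤ p) : 1 ≤ Real.log (Real.exp 1 * p / s) := by
  have h0 : (0 : ℝ) < s := by exact_mod_cast hs
  have h1 : (s : ℝ) ≤ p := by exact_mod_cast hsp
  have h2 : (0 : ℝ) < p := by linarith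
  rw [Real.le_log_iff_exp_le (by positivity), le_div_iff₀ h0]
  gcongr

lemma le_psi {s : ℕ} (hs : 1 ≤ s) (hsp : s ≤ p) : (s : ℝ) ≤ psi p s := by
  have := log_ge_one hs hsp
  have h0 : (0 : ℝ) < s := by exact_mod_cast hs
  unfold psi; nlinarith

lemma log_split {s t : ℕ} (hs : 1 ≤ s) (ht : 1 ≤ t) (hp : 1 ≤ p) :
    Real.log (Real.exp 1 * p / s) = Real.log (Real.exp 1 * p / t) + Real.log (t / s) := by
  have h0 : (0 : ℝ) < s := by exact_mod_cast hs
  have h1 : (0 : ℝ) < t := by exact_mod_cast ht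
  have h2 : (0 : ℝ) < p := by exact_mod_cast hp
  rw [← Real.log_mul (by positivity) (by positivity)]
  congr 1; field_simp

lemma psi_mono {s t : ℕ} (hs : 1 ≤ s) (hst : s ≤ t) (htp : t ≤ p) : psi p s ≤ psi p t := by
  have hL := log_ge_one (hs.trans hst) htp
  have h0 : (0 : ℝ) < s := by exact_mod_cast hs
  have h1 : (s : ℝ) ≤ t := by exact_mod_cast hst
  have h2 : (0 : ℝ) < t := by linarith
  unfold psi
  rw [log_split hs (hs.trans hst) (hs.trans (hst.trans htp))]
  have h3 : Real.log ((t : ℝ) / s) ≤ t / s - 1 := Real.log_le_sub_one_of_pos (by positivity)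
  have h4 : s * Real.log ((t : ℝ) / s) ≤ t - s := by
    calc s * Real.log ((t : ℝ) / s) ≤ s * (t / s - 1) := by gcongr
      _ = t - s := by field_simp
  nlinarith

lemma psi_one (hp : 1 ≤ p) : psi p 1 = 1 + Real.log p := by
  have h2 : (0 : ℝ) < p := by exact_mod_cast hp
  simp [psi, Real.log_mul (Real.exp_pos 1).ne' h2.ne']

lemma log_le_psi {s : ℕ} (hs : 1 ≤ s) (hsp : s ≤ p) : 1 + Real.log p ≤ psi p s := by
  rw [← psi_one (hs.trans hsp)]; exact psi_mono le_rfl hs hsp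

lemma psi_two {s0 s : ℕ} (hs0 : 1 ≤ s0) (h : 2 * s0 ≤ s) (hsp : s ≤ p) : psi p s0 ≤ 7 / 8 * psi p s := by
  have h1 := psi_mono (p := p) (s := 2 * s0) (by omega) h hsp
  have h2 := log_split (p := p) (s := s0) (t := 2 * s0) hs0 (by omega) (by omega)
  have h3 := log_ge_one (p := p) (s := 2 * s0) (by omega) (by omega)
  have h0 : (0 : ℝ) < s0 := by exact_mod_cast hs0
  have h4 : ((2 * s0 : ℕ) : ℝ) / s0 = 2 := by push_cast; field_simp
  rw [h4] at h2
  have h5 : psi p (2 * s0) = 2 * (s0 * Real.log (Real.exp 1 * p / (2 * s0 : ℕ))) := by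
    simp only [psi]; push_cast; ring
  have h6 : psi p s0 = s0 * Real.log (Real.exp 1 * p / (2 * s0 : ℕ)) + s0 * Real.log 2 := by
    unfold psi; rw [h2]; ring
  have := Real.log_two_lt_d9
  set L := Real.log (Real.exp 1 * p / (2 * s0 : ℕ))
  have h7 : s0 * Real.log 2 ≤ s0 * (0.75 * L) := by gcongr; linarith
  linarith

lemma psi_sub {s s0 t : ℕ} (hs : 1 ≤ s) (hs0 : 1 ≤ s0) (h1 : s ≤ t) (h2 : s0 ≤ t) (h3 : t ≤ s + s0)
    (htp : t ≤ p) : psi p t ≤ psi p s + psi p s0 := by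
  have hL := log_ge_one (hs.trans h1) htp
  have hp : (0 : ℝ) < p := by exact_mod_cast (hs.trans h1).trans htp
  have key : ∀ u : ℕ, 1 ≤ u → u ≤ t → u * Real.log (Real.exp 1 * p / t) ≤ psi p u := by
    intro u hu hut
    have h0 : (0 : ℝ) < u := by exact_mod_cast hu
    have h1 : (u : ℝ) ≤ t := by exact_mod_cast hut
    have h4 : (0 : ℝ) < t := by linarith
    unfold psi
    gcongr
  have a1 := key s hs h1
  have a2 := key s0 hs0 h2
  have : (t : ℝ) ≤ s + s0 := by exact_mod_cast h3
  calc psi p t ≤ (s + s0) * Real.log (Real.exp 1 * p / t) := by unfold psi; gcongr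
    _ ≤ _ := by rw [add_mul]; linarith

lemma psi_succ {s : ℕ} (hs : 1 ≤ s) (hsp : s + 1 ≤ p) : psi p (s + 1) - psi p s ≤ 1 + Real.log p := by
  have hp : (1 : ℕ) ≤ p := by omega
  have := psi_sub (p := p) (s := s) (s0 := 1) (t := s + 1) hs le_rfl (by omega) (by omega) le_rfl hsp
  rw [psi_one hp] at this
  linarith

lemma choose_le_psi {s : ℕ} (hs : 1 ≤ s) (hsp : s ≤ p) : (p.choose s : ℝ) ≤ Real.exp (psi p s) := by
  have h0 : (0 : ℝ) < s := by exact_mod_cast hs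
  have hp : (0 : ℝ) < p := by exact_mod_cast hs.trans hsp
  have h1 : ((s : ℝ) / p) ^ s * p.choose s ≤ (s / p + 1) ^ p := by
    rw [add_pow]
    have := Finset.single_le_sum (f := fun m => ((s : ℝ) / p) ^ m * 1 ^ (p - m) * (p.choose m : ℝ))
      (s := Finset.range (p + 1)) (fun _ _ => by positivity) (Finset.mem_range.2 (by omega : s < p + 1))
    simpa using this
  have h2 : ((s : ℝ) / p + 1) ^ p ≤ Real.exp s := by
    calc ((s : ℝ) / p + 1) ^ p ≤ (Real.exp (s / p)) ^ p := by
          gcongr; exact Real.add_one_le_exp _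
      _ = Real.exp s := by rw [← Real.exp_nat_mul]; congr 1; field_simp
  have h3 : Real.exp (psi p s) = Real.exp s * ((s : ℝ) / p) ^ (-(s : ℤ)) := by
    rw [psi, mul_comm, Real.exp_mul, Real.exp_log (by positivity), Real.rpow_natCast, mul_div_assoc, mul_pow, ← Real.exp_nat_mul, mul_one]
    congr 1
    rw [_root_.zpow_neg, zpow_natCast, ← inv_pow, inv_div]
  rw [h3, _root_.zpow_neg, zpow_natCast, ← div_eq_mul_inv, le_div_iff₀ (by positivity), mul_comm]
  exact h1.trans h2

end psi

lemma exists_net (E : Type*) [NormedAddCommGroup E] [NormedSpace ℝ E] [FiniteDimensional ℝ E] :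
    ∃ N : Finset E, N.card ≤ 5 ^ Module.finrank ℝ E ∧ (∀ c ∈ N, ‖c‖ ≤ 2) ∧
      ∀ e : E, ‖e‖ ≤ 2 → ∃ c ∈ N, ‖e - c‖ < 1 := by
  by_contra hcon
  push Not at hcon
  have : ∀ k : ℕ, ∃ N : Finset E, N.card = k ∧ (∀ c ∈ N, ‖c‖ ≤ 2) ∧ ∀ c ∈ N, ∀ d ∈ N, c ≠ d → 1 ≤ ‖c - d‖ := by
    intro k
    induction k with
    | zero => exact ⟨∅, by simp⟩
    | succ k ih =>
      obtain ⟨N, h1, h2, h3⟩ := ih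
      obtain ⟨e, he, hec⟩ := hcon N (Besicovitch.card_le_of_separated N h2 h3) h2
      have heN : e ∉ N := fun h => by have := hec e h; simp at this; linarith
      refine ⟨insert e N, by rw [Finset.card_insert_of_notMem heN, h1], ?_, ?_⟩
      · intro c hc
        rcases Finset.mem_insert.1 hc with rfl | hc
        · exact he
        · exact h2 c hc
      · intro c hc d hd hcd
        rcases Finset.mem_insert.1 hc with hc | hc <;> rcases Finset.mem_insert.1 hd with hd | hd
        · exact absurd (hc.trans hd.symm) hcd
        · rw [hc]; exact hec d hd
        · rw [hd, norm_sub_rev]; exact hec c hc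
        · exact h3 c hc d hd hcd
  obtain ⟨N, h1, h2, h3⟩ := this (5 ^ Module.finrank ℝ E + 1)
  have := Besicovitch.card_le_of_separated N h2 h3
  omega

lemma net_dir {E : Type*} [NormedAddCommGroup E] [InnerProductSpace ℝ E] (N : Finset E)
    (hN3 : ∀ e : E, ‖e‖ ≤ 2 → ∃ c ∈ N, ‖e - c‖ < 1) (v : E) (hv0 : 0 < ‖v‖) :
    ∃ x ∈ N, x ≠ 0 ∧ ‖v‖ ≤ inner ℝ x v := by
  set e : E := ‖v‖⁻¹ • v with he
  have hen : ‖e‖ = 1 := by rw [he, norm_smul, norm_inv, norm_norm, inv_mul_cancel₀ hv0.ne']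
  obtain ⟨x, hxN, hx⟩ := hN3 ((2 : ℝ) • e) (by rw [norm_smul, hen]; norm_num)
  have h1 : 1 ≤ inner ℝ e x := by
    have h3 : inner ℝ e ((2 : ℝ) • e) = 2 := by
      rw [real_inner_smul_right, real_inner_self_eq_norm_sq, hen]; norm_num
    have h4 : inner ℝ e ((2 : ℝ) • e - x) ≤ 1 := by
      have := real_inner_le_norm e ((2 : ℝ) • e - x)
      rw [hen] at this; linarith
    rw [inner_sub_right, h3] at h4
    linarith
  have h2 : ‖v‖ ≤ inner ℝ x v := by
    have hve : v = ‖v‖ • e := by rw [he, smul_smul, mul_inv_cancel₀ hv0.ne', one_smul]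
    rw [hve, real_inner_smul_right, norm_smul, hen, norm_norm, real_inner_comm]
    nlinarith
  refine ⟨x, hxN, ?_, h2⟩
  rintro rfl
  simp at h2
  rw [h2] at hv0; simp at hv0

lemma prob_one {n p : ℕ} (X : Matrix (Fin n) (Fin p) ℝ) (S : Finset (Fin p))
    {Ω : Type} [MeasurableSpace Ω] (P : Measure Ω) (ρ : ℝ) (W : Ω → Fin n → ℝ) (hW : subG P ρ W)
    (c : ℝ) (hc : 0 < c) :
    P {ω | ∃ a : ↥S → ℝ, c * enr (colSub X S *ᵥ a) < |W ω ⬝ᵥ (colSub X S *ᵥ a)|} ≤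
      ENNReal.ofReal (5 ^ S.card * Real.exp (-ρ * (c / 2) ^ 2 / 2)) := by
  let L : (↥S → ℝ) →ₗ[ℝ] EuclideanSpace ℝ (Fin n) :=
    (WithLp.linearEquiv 2 ℝ (Fin n → ℝ)).symm.toLinearMap ∘ₗ (colSub X S).mulVecLin
  let V := LinearMap.range L
  have hfr : Module.finrank ℝ V ≤ S.card := by
    have := LinearMap.finrank_range_le L
    simpa using this
  obtain ⟨N, hN1, hN2, hN3⟩ := exists_net V
  let kk : V → Fin n → ℝ := fun x => ‖x‖⁻¹ • (x : EuclideanSpace ℝ (Fin n)).ofLp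
  have hsub : {ω | ∃ a : ↥S → ℝ, c * enr (colSub X S *ᵥ a) < |W ω ⬝ᵥ (colSub X S *ᵥ a)|} ⊆
      ⋃ x ∈ N.filter (fun x => x ≠ 0), {ω | c / 2 < |ipr (W ω) (kk x)|} := by
    rintro ω ⟨a, ha⟩
    set w := WithLp.toLp 2 (W ω) with hw
    set v : V := V.orthogonalProjectionOnto w with hv
    have hin : ∀ x : V, inner ℝ (x : EuclideanSpace ℝ (Fin n)) w = inner ℝ x v := by
      intro x
      rw [hv, Submodule.inner_orthogonalProjectionOnto_eq_of_mem_left]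
    have hdot : ∀ x : EuclideanSpace ℝ (Fin n), inner ℝ x w = W ω ⬝ᵥ x.ofLp := by
      intro x
      simp [PiLp.inner_apply, hw, dotProduct]
    let z : V := ⟨L a, LinearMap.mem_range_self L a⟩
    have hz : c * ‖z‖ < |inner ℝ z v| := by
      rw [← hin, hdot]
      rw [enr_eq_norm] at ha
      exact ha
    have hvc : c < ‖v‖ := by
      have h1 := abs_real_inner_le_norm z v
      have h2 : c * ‖z‖ < ‖v‖ * ‖z‖ := by linarith [mul_comm ‖v‖ ‖z‖]
      exact lt_of_mul_lt_mul_right h2 (norm_nonneg _)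
    have hv0 : 0 < ‖v‖ := hc.trans hvc
    obtain ⟨x, hxN, hx0, h2⟩ := net_dir N hN3 v hv0
    have hxp : 0 < ‖x‖ := norm_pos_iff.2 hx0
    have hx2 := hN2 x hxN
    simp only [Set.mem_iUnion]
    refine ⟨x, Finset.mem_filter.2 ⟨hxN, hx0⟩, ?_⟩
    show c / 2 < |W ω ⬝ᵥ (‖x‖⁻¹ • (x : EuclideanSpace ℝ (Fin n)).ofLp)|
    rw [dotProduct_smul, ← hdot, hin, smul_eq_mul, abs_of_nonneg (by have : 0 ≤ inner ℝ x v := hv0.le.trans h2; positivity),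
      ← div_eq_inv_mul, lt_div_iff₀ hxp]
    nlinarith
  refine (measure_mono hsub).trans ((measure_biUnion_finset_le _ _).trans ?_)
  have hk : ∀ x ∈ N.filter (fun x => x ≠ 0), P {ω | c / 2 < |ipr (W ω) (kk x)|} ≤ ENNReal.ofReal (Real.exp (-ρ * (c / 2) ^ 2 / 2)) := by
    intro x hx
    have hx0 := (Finset.mem_filter.1 hx).2
    refine hW (kk x) ?_ _ (by positivity)
    show enr (‖x‖⁻¹ • (x : EuclideanSpace ℝ (Fin n)).ofLp) = 1
    rw [enr_smul, enr_eq_norm]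
    have : ‖x‖ ≠ 0 := norm_ne_zero_iff.2 hx0
    simp only [abs_inv, abs_norm, WithLp.toLp_ofLp]
    exact inv_mul_cancel₀ this
  refine (Finset.sum_le_card_nsmul _ _ _ hk).trans ?_
  rw [nsmul_eq_mul, ENNReal.ofReal_mul (by positivity)]
  gcongr
  rw [← ENNReal.ofReal_natCast]
  apply ENNReal.ofReal_le_ofReal
  have h1 : (N.filter (fun x => x ≠ 0)).card ≤ 5 ^ S.card :=
    (Finset.card_filter_le _ _).trans (hN1.trans (Nat.pow_le_pow_right (by norm_num) hfr))
  exact_mod_cast h1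

/-- The good noise event. -/
def goodW {n p : ℕ} (X : Matrix (Fin n) (Fin p) ℝ) (K : ℝ) (W : Fin n → ℝ) : Prop :=
  ∀ S : Finset (Fin p), S.Nonempty → ∀ a : ↥S → ℝ,
    |W ⬝ᵥ (colSub X S *ᵥ a)| ≤ √(K * psi p S.card) * enr (colSub X S *ᵥ a)

lemma prob_good {n p : ℕ} (hp : 1 ≤ p) (X : Matrix (Fin n) (Fin p) ℝ)
    {Ω : Type} [MeasurableSpace Ω] (P : Measure Ω) (ρ : ℝ) (hρ : 0 < ρ) (W : Ω → Fin n → ℝ) (hW : subG P ρ W) :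
    P {ω | ¬ goodW X (72 / ρ) (W ω)} ≤ ENNReal.ofReal (Real.exp (-5 * Real.log p)) := by
  have hp' : (0 : ℝ) < p := by exact_mod_cast hp
  have hsub : {ω | ¬ goodW X (72 / ρ) (W ω)} ⊆ ⋃ s ∈ Finset.Icc 1 p, ⋃ S ∈ Finset.powersetCard s (Finset.univ : Finset (Fin p)),
      {ω | ∃ a : ↥S → ℝ, √(72 / ρ * psi p S.card) * enr (colSub X S *ᵥ a) < |W ω ⬝ᵥ (colSub X S *ᵥ a)|} := by
    intro ω hω
    simp only [goodW, Set.mem_ofPred_eq] at hω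
    push Not at hω
    obtain ⟨S, hS, a, ha⟩ := hω
    simp only [Set.mem_iUnion]
    refine ⟨S.card, ?_, S, ?_, a, ha⟩
    · rw [Finset.mem_Icc]; exact ⟨hS.card_pos, by simpa using Finset.card_le_univ S⟩
    · simp
  refine (measure_mono hsub).trans ((measure_biUnion_finset_le _ _).trans ?_)
  have hs : ∀ s ∈ Finset.Icc 1 p, P (⋃ S ∈ Finset.powersetCard s (Finset.univ : Finset (Fin p)),
      {ω | ∃ a : ↥S → ℝ, √(72 / ρ * psi p S.card) * enr (colSub X S *ᵥ a) < |W ω ⬝ᵥ (colSub X S *ᵥ a)|})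
      ≤ ENNReal.ofReal (Real.exp (-6 * Real.log p)) := by
    intro s hs
    rw [Finset.mem_Icc] at hs
    have hle := le_psi hs.1 hs.2
    have hlog := log_le_psi hs.1 hs.2
    have h0 : (1 : ℝ) ≤ s := by exact_mod_cast hs.1
    refine (measure_biUnion_finset_le _ _).trans ?_
    have hb : ∀ S ∈ Finset.powersetCard s (Finset.univ : Finset (Fin p)),
        P {ω | ∃ a : ↥S → ℝ, √(72 / ρ * psi p S.card) * enr (colSub X S *ᵥ a) < |W ω ⬝ᵥ (colSub X S *ᵥ a)|}
         ≤ ENNReal.ofReal (Real.exp (-7 * psi p s)) := by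
      intro S hS
      have hc : S.card = s := (Finset.mem_powersetCard.1 hS).2
      have hpos : 0 < 72 / ρ * psi p S.card := by rw [hc]; have : 0 < psi p s := by linarith
                                                  positivity
      refine (prob_one X S P ρ W hW _ (Real.sqrt_pos.2 hpos)).trans (ENNReal.ofReal_le_ofReal ?_)
      rw [div_pow, Real.sq_sqrt hpos.le, hc]
      have h5 : (5 : ℝ) ^ s ≤ Real.exp (2 * psi p s) := by
        have : (5 : ℝ) ≤ Real.exp 2 := by
          have h1 := Real.exp_one_gt_d9
          have : Real.exp 2 = Real.exp 1 * Real.exp 1 := by rw [← Real.exp_add]; norm_num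
          nlinarith
        calc (5 : ℝ) ^ s ≤ Real.exp 2 ^ s := by gcongr
          _ = Real.exp (s * 2) := by rw [Real.exp_nat_mul]
          _ ≤ _ := by apply Real.exp_le_exp.2; linarith
      calc 5 ^ s * Real.exp (-ρ * (72 / ρ * psi p s / 2 ^ 2) / 2) ≤ Real.exp (2 * psi p s) * Real.exp (-ρ * (72 / ρ * psi p s / 2 ^ 2) / 2) := by gcongr
        _ = Real.exp (-7 * psi p s) := by
          rw [← Real.exp_add]; congr 1; field_simp; ring
    refine (Finset.sum_le_card_nsmul _ _ _ hb).trans ?_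
    rw [nsmul_eq_mul, Finset.card_powersetCard, Finset.card_univ, Fintype.card_fin, ← ENNReal.ofReal_natCast, ← ENNReal.ofReal_mul (by positivity)]
    apply ENNReal.ofReal_le_ofReal
    calc (p.choose s : ℝ) * Real.exp (-7 * psi p s) ≤ Real.exp (psi p s) * Real.exp (-7 * psi p s) := by
          gcongr; exact choose_le_psi hs.1 hs.2
      _ = Real.exp (-6 * psi p s) := by rw [← Real.exp_add]; congr 1; ring
      _ ≤ _ := by apply Real.exp_le_exp.2; linarith
  refine (Finset.sum_le_card_nsmul _ _ _ hs).trans ?_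
  rw [nsmul_eq_mul, ← ENNReal.ofReal_natCast, ← ENNReal.ofReal_mul (by positivity)]
  apply ENNReal.ofReal_le_ofReal
  simp only [Nat.card_Icc, add_tsub_cancel_right]
  nth_rewrite 1 [← Real.exp_log hp']
  rw [← Real.exp_add]
  apply Real.exp_le_exp.2; linarith

end part5

section part6

/-- number of admissible models of size `s` -/
noncomputable def Nc {n p : ℕ} (X : Matrix (Fin n) (Fin p) ℝ) (s : ℕ) : ℕ :=
  (Finset.univ.filter fun S' : Finset (Fin p) => S'.card = s ∧ 0 < gramDet (colSub X S')).card

/-- model prefactor -/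
noncomputable def cst {n p : ℕ} (X : Matrix (Fin n) (Fin p) ℝ) (D lam : ℝ) (S : Finset (Fin p)) : ℝ :=
  (if S.Nonempty ∧ 0 < gramDet (colSub X S) then 1 else 0) *
    Real.exp (-2 * D * S.card * Real.log (Real.exp 1 * p / S.card)) * (Nc X S.card : ℝ)⁻¹ *
    √(gramDet (colSub X S)) * (lam / √π) ^ S.card

/-- restricted integral -/
noncomputable def lin {n p : ℕ} (X : Matrix (Fin n) (Fin p) ℝ) (lam : ℝ) (Y : Fin n → ℝ)
    (S : Finset (Fin p)) (B : Set (↥S → ℝ)) : ℝ≥0∞ :=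
  ∫⁻ Q in B, ENNReal.ofReal (gf Y lam (colSub X S *ᵥ Q))

/-- model mass -/
noncomputable def mm {n p : ℕ} (X : Matrix (Fin n) (Fin p) ℝ) (D lam : ℝ) (Y : Fin n → ℝ)
    (S : Finset (Fin p)) (B : Set (↥S → ℝ)) : ℝ≥0∞ :=
  ENNReal.ofReal (cst X D lam S) * lin X lam Y S B

variable {n p : ℕ} {X : Matrix (Fin n) (Fin p) ℝ}

lemma cst_nonneg (D : ℝ) {lam : ℝ} (hl : 0 < lam) (S : Finset (Fin p)) : 0 ≤ cst X D lam S := by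
  unfold cst
  have : (0 : ℝ) ≤ (if S.Nonempty ∧ 0 < gramDet (colSub X S) then 1 else 0) := by split_ifs <;> norm_num
  positivity

lemma cst_zero (D lam : ℝ) (S : Finset (Fin p)) (h : ¬ (S.Nonempty ∧ 0 < gramDet (colSub X S))) :
    cst X D lam S = 0 := by
  unfold cst; rw [if_neg h]; simp

lemma cst_eq (D lam : ℝ) (S : Finset (Fin p)) (h : S.Nonempty ∧ 0 < gramDet (colSub X S)) :
    cst X D lam S = Real.exp (-(2 * D * psi p S.card)) * (Nc X S.card : ℝ)⁻¹ *
      √(gramDet (colSub X S)) * (lam / √π) ^ S.card := by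
  unfold cst psi; rw [if_pos h, one_mul]
  congr 4; ring

lemma Nc_pos (S : Finset (Fin p)) (h : 0 < gramDet (colSub X S)) : 0 < Nc X S.card := by
  unfold Nc
  exact Finset.card_pos.2 ⟨S, by simp [h]⟩

lemma Nc_le_choose (s : ℕ) : Nc X s ≤ p.choose s := by
  unfold Nc
  calc _ ≤ (Finset.powersetCard s (Finset.univ : Finset (Fin p))).card := by
        apply Finset.card_le_card
        intro S hS
        simp at hS
        simp [hS.1]
    _ = _ := by simp

lemma sparse_ext (R S : Finset (Fin p)) (h : R ⊆ S) (a : ↥R → ℝ) :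
    ∃ b : ↥S → ℝ, colSub X S *ᵥ b = colSub X R *ᵥ a ∧ ∀ k (hk : k ∈ R), b ⟨k, h hk⟩ = a ⟨k, hk⟩ := by
  refine ⟨fun k => if hk : (k : Fin p) ∈ R then a ⟨k, hk⟩ else 0, ?_, ?_⟩
  · rw [colSub_mulVec_sum, colSub_mulVec_sum]
    have h1 : ∑ k : ↥S, (if hk : (k : Fin p) ∈ R then a ⟨k, hk⟩ else 0) • xcol X k
      = ∑ k ∈ S, (if hk : (k : Fin p) ∈ R then a ⟨k, hk⟩ else 0) • xcol X k :=
      Finset.sum_coe_sort S (fun k => (if hk : (k : Fin p) ∈ R then a ⟨k, hk⟩ else 0) • xcol X k)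
    have h2 : ∑ k : ↥R, a k • xcol X k
      = ∑ k ∈ R, (if hk : (k : Fin p) ∈ R then a ⟨k, hk⟩ else 0) • xcol X k := by
      rw [← Finset.sum_coe_sort R (fun k => (if hk : (k : Fin p) ∈ R then a ⟨k, hk⟩ else 0) • xcol X k)]
      apply Finset.sum_congr rfl
      intro k _
      simp
    rw [h1, h2]
    symm
    apply Finset.sum_subset h
    intro k _ hk
    simp [hk]
  · intro k hk; simp [hk]

lemma gram_subset (R S : Finset (Fin p)) (h : R ⊆ S) (hS : 0 < gramDet (colSub X S)) :
    0 < gramDet (colSub X R) := by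
  apply gram_pos_of_inj
  intro a ha
  obtain ⟨b, hb, hba⟩ := sparse_ext (X := X) R S h a
  have := inj_of_gram_pos _ hS b (hb.trans ha)
  ext k
  have h2 := hba k.1 k.2
  rw [this] at h2
  exact h2.symm

lemma Nc_succ (s : ℕ) : Nc X (s + 1) ≤ p * Nc X s := by
  unfold Nc
  set Fs := Finset.univ.filter fun S' : Finset (Fin p) => S'.card = s ∧ 0 < gramDet (colSub X S')
  calc _ ≤ ((Finset.univ ×ˢ Fs).image fun x : Fin p × Finset (Fin p) => insert x.1 x.2).card := by
        apply Finset.card_le_card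
        intro S hS
        simp only [Finset.mem_filter, Finset.mem_univ, true_and] at hS
        obtain ⟨j, hj⟩ := Finset.card_pos.1 (by omega : 0 < S.card)
        rw [Finset.mem_image]
        refine ⟨(j, S.erase j), ?_, Finset.insert_erase hj⟩
        simp only [Fs, Finset.mem_product, Finset.mem_filter, Finset.mem_univ, true_and]
        exact ⟨by rw [Finset.card_erase_of_mem hj]; omega, gram_subset _ _ (Finset.erase_subset _ _) hS.2⟩
    _ ≤ (Finset.univ ×ˢ Fs).card := Finset.card_image_le
    _ = _ := by simp

lemma meas_gf (Y : Fin n → ℝ) (lam : ℝ) : Measurable fun u => ENNReal.ofReal (gf Y lam u) :=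
  ENNReal.measurable_ofReal.comp (continuous_gf Y lam).measurable

lemma lin_C (Y : Fin n → ℝ) (lam : ℝ) (hl : 0 < lam) (R S : Finset (Fin p)) (j : Fin p) (hj : j ∉ R)
    (hS : S = insert j R) (hjS : j ∈ S) (a : ↥R → ℝ) (r : Fin n → ℝ)
    (hr : r = xcol X j - colSub X R *ᵥ a) (ho : ∀ q, (colSub X R *ᵥ q) ⬝ᵥ r = 0) (hrr : 0 < r ⬝ᵥ r)
    (B : Set ℝ) (hB : MeasurableSet B) (ρ0 : ℝ)
    (hρ : ∀ t ∈ B, ρ0 ≤ (r ⬝ᵥ r) * (t - (Y ⬝ᵥ r) / (r ⬝ᵥ r)) ^ 2) :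
    lin X lam Y S {Q | Q ⟨j, hjS⟩ ∈ B} ≤
      ENNReal.ofReal (√8 * Real.exp (3 / 2 * lam ^ 2 - ρ0 / 8)) * lin X lam Y S Set.univ := by
  unfold lin
  have hm : MeasurableSet {Q : ↥S → ℝ | Q ⟨j, hjS⟩ ∈ B} := (measurable_pi_apply _) hB
  have e1 : ∫⁻ Q in {Q : ↥S → ℝ | Q ⟨j, hjS⟩ ∈ B}, ENNReal.ofReal (gf Y lam (colSub X S *ᵥ Q)) =
      ∫⁻ q : ↥R → ℝ, ∫⁻ t : ℝ in B, ENNReal.ofReal (gf Y lam (colSub X R *ᵥ q + t • r)) := by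
    rw [← lintegral_indicator hm, hr]
    have := shear X R S j hj hS hjS a (fun t u => B.indicator (fun _ => ENNReal.ofReal (gf Y lam u)) t) (by
      have : Function.uncurry (fun (t : ℝ) u => B.indicator (fun _ => ENNReal.ofReal (gf Y lam u)) t) =
          (Prod.fst ⁻¹' B).indicator (fun x : ℝ × (Fin n → ℝ) => ENNReal.ofReal (gf Y lam x.2)) := by
        ext ⟨t, u⟩; simp [Function.uncurry, Set.indicator]
      rw [this]
      exact ((meas_gf Y lam).comp measurable_snd).indicator (measurable_fst hB))
    refine Eq.trans (Eq.trans ?_ this) ?_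
    · apply lintegral_congr
      intro Q
      rfl
    · apply lintegral_congr
      intro q
      rw [← lintegral_indicator hB]
      rfl
  have e2 : ∫⁻ Q : ↥S → ℝ, ENNReal.ofReal (gf Y lam (colSub X S *ᵥ Q)) =
      ∫⁻ q : ↥R → ℝ, ∫⁻ t : ℝ, ENNReal.ofReal (gf Y lam (colSub X R *ᵥ q + t • r)) := by
    rw [hr]
    exact shear X R S j hj hS hjS a (fun t u => ENNReal.ofReal (gf Y lam u)) ((meas_gf Y lam).comp measurable_snd)
  rw [e1, Measure.restrict_univ, e2, ← lintegral_const_mul' _ _ ENNReal.ofReal_ne_top]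
  apply lintegral_mono
  intro q
  exact oneD_C Y _ r lam (ho q) hrr hl B hB ρ0 hρ

lemma lin_B (Y : Fin n → ℝ) (lam : ℝ) (hl : 0 < lam) (R S : Finset (Fin p)) (j : Fin p) (hj : j ∉ R)
    (hS : S = insert j R) (a : ↥R → ℝ) (r : Fin n → ℝ)
    (hr : r = xcol X j - colSub X R *ᵥ a) (ho : ∀ q, (colSub X R *ᵥ q) ⬝ᵥ r = 0) (hrr : 0 < r ⬝ᵥ r) :
    lin X lam Y R Set.univ ≤
      ENNReal.ofReal (√(r ⬝ᵥ r) / √π * Real.exp (3 / 2 * lam ^ 2 - (Y ⬝ᵥ r) ^ 2 / (r ⬝ᵥ r) / 4)) *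
        lin X lam Y S Set.univ := by
  unfold lin
  have hjS : j ∈ S := by rw [hS]; simp
  have e2 : ∫⁻ Q : ↥S → ℝ, ENNReal.ofReal (gf Y lam (colSub X S *ᵥ Q)) =
      ∫⁻ q : ↥R → ℝ, ∫⁻ t : ℝ, ENNReal.ofReal (gf Y lam (colSub X R *ᵥ q + t • r)) := by
    rw [hr]
    exact shear X R S j hj hS hjS a (fun t u => ENNReal.ofReal (gf Y lam u)) ((meas_gf Y lam).comp measurable_snd)
  rw [Measure.restrict_univ, Measure.restrict_univ, e2, ← lintegral_const_mul' _ _ ENNReal.ofReal_ne_top]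
  apply lintegral_mono
  intro q
  exact oneD_B Y _ r lam (ho q) hrr hl

lemma mm_B (Y : Fin n → ℝ) (D lam : ℝ) (hl : 0 < lam) (R S : Finset (Fin p)) (j : Fin p) (hj : j ∉ R)
    (hS : S = insert j R) (a : ↥R → ℝ) (r : Fin n → ℝ)
    (hR : R.Nonempty) (hRg : 0 < gramDet (colSub X R))
    (hr : r = xcol X j - colSub X R *ᵥ a) (ho : ∀ q, (colSub X R *ᵥ q) ⬝ᵥ r = 0) (hrr : 0 < r ⬝ᵥ r) :
    mm X D lam Y R Set.univ ≤
      ENNReal.ofReal (Real.exp (2 * D * (psi p (R.card + 1) - psi p R.card)) * p * lam⁻¹ *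
        Real.exp (3 / 2 * lam ^ 2 - (Y ⬝ᵥ r) ^ 2 / (r ⬝ᵥ r) / 4)) * mm X D lam Y S Set.univ := by
  obtain ⟨g1, g2⟩ := gram_insert X R S j hj hS a hRg r hr ho hrr
  have hSn : S.Nonempty := ⟨j, by rw [hS]; simp⟩
  have hSc : S.card = R.card + 1 := by rw [hS, Finset.card_insert_of_notMem hj]
  unfold mm
  refine (mul_le_mul_right (lin_B Y lam hl R S j hj hS a r hr ho hrr) _).trans ?_
  rw [← mul_assoc, ← mul_assoc, ← ENNReal.ofReal_mul (cst_nonneg D hl R), ← ENNReal.ofReal_mul (by positivity)]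
  refine mul_le_mul_left (ENNReal.ofReal_le_ofReal ?_) _
  rw [cst_eq D lam R ⟨hR, hRg⟩, cst_eq D lam S ⟨hSn, g1⟩, g2, hSc]
  have n1 : (0 : ℝ) < Nc X R.card := by exact_mod_cast Nc_pos R hRg
  have n2 : (0 : ℝ) < Nc X (R.card + 1) := by rw [← hSc]; exact_mod_cast Nc_pos S g1
  have n3 : (Nc X (R.card + 1) : ℝ) ≤ p * Nc X R.card := by exact_mod_cast Nc_succ R.card
  set E := Real.exp (3 / 2 * lam ^ 2 - (Y ⬝ᵥ r) ^ 2 / (r ⬝ᵥ r) / 4)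
  have n4 : (Nc X R.card : ℝ)⁻¹ ≤ p * (Nc X (R.card + 1) : ℝ)⁻¹ := by
    rw [← div_eq_mul_inv, le_div_iff₀ n2, inv_mul_le_iff₀ n1]; linarith
  have e1 : Real.exp (-(2 * D * psi p R.card)) = Real.exp (2 * D * (psi p (R.card + 1) - psi p R.card)) *
      Real.exp (-(2 * D * psi p (R.card + 1))) := by
    rw [← Real.exp_add]; congr 1; ring
  have hpi : 0 < √π := Real.sqrt_pos.2 Real.pi_pos
  rw [e1]
  set E1 := Real.exp (2 * D * (psi p (R.card + 1) - psi p R.card))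
  set E2 := Real.exp (-(2 * D * psi p (R.card + 1)))
  set c := (lam / √π)
  have hc : lam⁻¹ * c = (√π)⁻¹ := by simp only [c]; field_simp
  have hc0 : 0 < c := by positivity
  calc E1 * E2 * (Nc X R.card : ℝ)⁻¹ * √(gramDet (colSub X R)) * c ^ R.card * (√(r ⬝ᵥ r) / √π * E)
      ≤ E1 * E2 * (p * (Nc X (R.card + 1) : ℝ)⁻¹) * √(gramDet (colSub X R)) * c ^ R.card * (√(r ⬝ᵥ r) / √π * E) := by
        gcongr
    _ = E1 * E2 * (p * (Nc X (R.card + 1) : ℝ)⁻¹) * √(gramDet (colSub X R)) * c ^ R.card * (√(r ⬝ᵥ r) * (lam⁻¹ * c) * E) := by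
        rw [hc, div_eq_mul_inv]
    _ = _ := by rw [pow_succ]; ring

end part6

section part7

variable {n p : ℕ} {X : Matrix (Fin n) (Fin p) ℝ}

lemma lsq (S : Finset (Fin p)) (hg : 0 < gramDet (colSub X S)) (θ : Fin n → ℝ) :
    ∃ Q0 : ↥S → ℝ, ∀ q, (colSub X S *ᵥ q) ⬝ᵥ (θ - colSub X S *ᵥ Q0) = 0 := by
  set A := colSub X S
  have hu : IsUnit (Aᵀ * A).det := by
    rw [isUnit_iff_ne_zero]; exact hg.ne'
  refine ⟨(Aᵀ * A)⁻¹ *ᵥ (Aᵀ *ᵥ θ), fun q => ?_⟩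
  have : Aᵀ *ᵥ (θ - A *ᵥ ((Aᵀ * A)⁻¹ *ᵥ (Aᵀ *ᵥ θ))) = 0 := by
    rw [mulVec_sub, mulVec_mulVec, mulVec_mulVec, Matrix.mul_nonsing_inv _ hu, one_mulVec, sub_self]
  rw [← vecMul_transpose, ← dotProduct_mulVec, this, dotProduct_zero]

lemma gf_expand (θ W v : Fin n → ℝ) (lam : ℝ) :
    gf (θ + W) lam (θ + v) = Real.exp (-(1/2) * (W ⬝ᵥ W) + W ⬝ᵥ v - (1/2) * enr v ^ 2 - lam * enr (θ + v)) := by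
  unfold gf
  have : (fun t => (θ + W) t - (θ + v) t) = W - v := by ext i; simp
  rw [this, enr_sq, enr_sq]
  simp only [sub_dotProduct, dotProduct_sub, dotProduct_comm v W]
  congr 1; ring

/-- common normalising factor -/
noncomputable def Gn (θ W : Fin n → ℝ) (lam : ℝ) : ℝ := Real.exp (-(1/2) * (W ⬝ᵥ W) - lam * enr θ)

lemma gf_up (θ W v : Fin n → ℝ) (lam : ℝ) (hl : 0 < lam) (k : ℝ) (hk : 0 ≤ k) (hW : |W ⬝ᵥ v| ≤ √k * enr v) :
    gf (θ + W) lam (θ + v) ≤ Gn θ W lam * Real.exp (2 * lam ^ 2 + k) * Real.exp (-(1/8) * enr v ^ 2) := by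
  rw [gf_expand, Gn, ← Real.exp_add, ← Real.exp_add]
  apply Real.exp_le_exp.2
  have h1 : enr θ ≤ enr (θ + v) + enr v := by
    have := enr_le_add_sub θ (θ + v)
    have e : θ - (θ + v) = -v := by abel
    rw [e, enr_neg] at this; exact this
  have h2 := (abs_le.1 hW).2
  have h3 := Real.sq_sqrt hk
  have h4 := mul_le_mul_of_nonneg_left h1 hl.le
  nlinarith [sq_nonneg (√k - enr v / 2), sq_nonneg (4 * lam - enr v)]

lemma gf_low (θ W v : Fin n → ℝ) (lam : ℝ) (hl : 0 < lam) (k : ℝ) (hk : 0 ≤ k) (hW : |W ⬝ᵥ v| ≤ √k * enr v) :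
    Gn θ W lam * Real.exp (-lam ^ 2 - k) * Real.exp (-1 * enr v ^ 2) ≤ gf (θ + W) lam (θ + v) := by
  rw [gf_expand, Gn, ← Real.exp_add, ← Real.exp_add]
  apply Real.exp_le_exp.2
  have h1 := enr_add_le θ v
  have h2 := (abs_le.1 hW).1
  have h3 := Real.sq_sqrt hk
  have h4 := mul_le_mul_of_nonneg_left h1 hl.le
  nlinarith [sq_nonneg (√k - enr v / 2), sq_nonneg (2 * lam - enr v)]

lemma psi_nonneg {s : ℕ} (hs : 1 ≤ s) (hsp : s ≤ p) : 0 ≤ psi p s := (Nat.cast_nonneg s).trans (le_psi hs hsp)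

lemma card_le_p (S : Finset (Fin p)) : S.card ≤ p := by simpa using Finset.card_le_univ S

lemma lin_up (lam K : ℝ) (hl : 0 < lam) (hK : 0 < K) (W θ : Fin n → ℝ) (hW : goodW X K W)
    (S S0 : Finset (Fin p)) (hS : S.Nonempty) (hS0 : S0.Nonempty) (hg : 0 < gramDet (colSub X S))
    (b : ↥S0 → ℝ) (hb : θ = colSub X S0 *ᵥ b) :
    ENNReal.ofReal (√(gramDet (colSub X S))) * lin X lam (θ + W) S Set.univ ≤
      ENNReal.ofReal (Gn θ W lam * Real.exp (2 * lam ^ 2 + K * (psi p S.card + psi p S0.card)) *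
        √(π / (1/8)) ^ S.card) := by
  obtain ⟨Q0, hQ0⟩ := lsq S hg θ
  have hT : (S ∪ S0).Nonempty := hS.mono Finset.subset_union_left
  have hψ : psi p (S ∪ S0).card ≤ psi p S.card + psi p S0.card :=
    psi_sub hS.card_pos hS0.card_pos (Finset.card_le_card Finset.subset_union_left)
      (Finset.card_le_card Finset.subset_union_right) (Finset.card_union_le _ _) (card_le_p _)
  have hψ0 : 0 ≤ psi p (S ∪ S0).card := psi_nonneg hT.card_pos (card_le_p _)
  set CC := Gn θ W lam * Real.exp (2 * lam ^ 2 + K * (psi p S.card + psi p S0.card)) with hCC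
  have hG : 0 < Gn θ W lam := Real.exp_pos _
  have hCC0 : 0 < CC := by positivity
  have pt : ∀ Q, gf (θ + W) lam (colSub X S *ᵥ Q) ≤ CC * Real.exp (-(1/8) * enr (colSub X S *ᵥ (Q - Q0)) ^ 2) := by
    intro Q
    set v := colSub X S *ᵥ Q - θ with hv
    obtain ⟨c1, hc1, -⟩ := sparse_ext (X := X) S (S ∪ S0) Finset.subset_union_left Q
    obtain ⟨c2, hc2, -⟩ := sparse_ext (X := X) S0 (S ∪ S0) Finset.subset_union_right b
    have hvT : v = colSub X (S ∪ S0) *ᵥ (c1 - c2) := by rw [mulVec_sub, hc1, hc2, hv, hb]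
    have hWv := hW (S ∪ S0) hT (c1 - c2)
    rw [← hvT] at hWv
    have h1 := gf_up θ W v lam hl _ (by positivity) hWv
    have e : θ + v = colSub X S *ᵥ Q := by rw [hv]; abel
    rw [e] at h1
    refine h1.trans ?_
    have h2 : enr (colSub X S *ᵥ (Q - Q0)) ^ 2 ≤ enr v ^ 2 := by
      have e2 : v = colSub X S *ᵥ (Q - Q0) - (θ - colSub X S *ᵥ Q0) := by rw [hv, mulVec_sub]; abel
      have e3 := hQ0 (Q - Q0)
      have : enr v ^ 2 = enr (colSub X S *ᵥ (Q - Q0)) ^ 2 + enr (θ - colSub X S *ᵥ Q0) ^ 2 := by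
        rw [e2, enr_sq, enr_sq, enr_sq]
        generalize colSub X S *ᵥ (Q - Q0) = x at *
        generalize (θ - colSub X S *ᵥ Q0) = y at *
        simp only [sub_dotProduct, dotProduct_sub, dotProduct_comm y x, e3]
        ring
      rw [this]; nlinarith [sq_nonneg (enr (θ - colSub X S *ᵥ Q0))]
    rw [hCC]
    exact mul_le_mul (mul_le_mul_of_nonneg_left (Real.exp_le_exp.2 (by gcongr)) hG.le)
      (Real.exp_le_exp.2 (by linarith)) (Real.exp_pos _).le (by positivity)
  unfold lin
  rw [Measure.restrict_univ]
  calc ENNReal.ofReal (√(gramDet (colSub X S))) * ∫⁻ Q : ↥S → ℝ, ENNReal.ofReal (gf (θ + W) lam (colSub X S *ᵥ Q))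
      ≤ ENNReal.ofReal (√(gramDet (colSub X S))) * ∫⁻ Q : ↥S → ℝ, ENNReal.ofReal CC * ENNReal.ofReal (Real.exp (-(1/8) * enr (colSub X S *ᵥ (Q - Q0)) ^ 2)) := by
        gcongr with Q
        rw [← ENNReal.ofReal_mul hCC0.le]
        exact ENNReal.ofReal_le_ofReal (pt Q)
    _ = ENNReal.ofReal CC * (ENNReal.ofReal (√(gramDet (colSub X S))) * ∫⁻ Q : ↥S → ℝ, ENNReal.ofReal (Real.exp (-(1/8) * enr (colSub X S *ᵥ Q) ^ 2))) := by
        rw [lintegral_const_mul' _ _ ENNReal.ofReal_ne_top,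
          lintegral_sub_right_eq_self (fun Q => ENNReal.ofReal (Real.exp (-(1/8) * enr (colSub X S *ᵥ Q) ^ 2))) Q0]
        ring
    _ = _ := by
        rw [gauss_lint _ hg (by norm_num), ← ENNReal.ofReal_mul hCC0.le, Fintype.card_coe]

lemma lin_low (lam K : ℝ) (hl : 0 < lam) (hK : 0 < K) (W θ : Fin n → ℝ) (hW : goodW X K W)
    (S0 : Finset (Fin p)) (hS0 : S0.Nonempty) (hg : 0 < gramDet (colSub X S0))
    (b : ↥S0 → ℝ) (hb : θ = colSub X S0 *ᵥ b) :
      ENNReal.ofReal (Gn θ W lam * Real.exp (-lam ^ 2 - K * psi p S0.card) *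
        √(π / 1) ^ S0.card) ≤ 
    ENNReal.ofReal (√(gramDet (colSub X S0))) * lin X lam (θ + W) S0 Set.univ := by
  have hψ0 : 0 ≤ psi p S0.card := psi_nonneg hS0.card_pos (card_le_p _)
  set CC := Gn θ W lam * Real.exp (-lam ^ 2 - K * psi p S0.card) with hCC
  have hG : 0 < Gn θ W lam := Real.exp_pos _
  have hCC0 : 0 < CC := by positivity
  have pt : ∀ Q, CC * Real.exp (-1 * enr (colSub X S0 *ᵥ (Q - b)) ^ 2) ≤ gf (θ + W) lam (colSub X S0 *ᵥ Q) := by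
    intro Q
    have h1 := gf_low θ W _ lam hl _ (by positivity) (hW S0 hS0 (Q - b))
    have e : θ + colSub X S0 *ᵥ (Q - b) = colSub X S0 *ᵥ Q := by rw [mulVec_sub, hb]; abel
    rw [e] at h1
    exact h1
  unfold lin
  rw [Measure.restrict_univ]
  calc ENNReal.ofReal (CC * √(π / 1) ^ S0.card)
      = ENNReal.ofReal CC * (ENNReal.ofReal (√(gramDet (colSub X S0))) * ∫⁻ Q : ↥S0 → ℝ, ENNReal.ofReal (Real.exp (-1 * enr (colSub X S0 *ᵥ Q) ^ 2))) := by
        rw [gauss_lint _ hg (by norm_num), ← ENNReal.ofReal_mul hCC0.le, Fintype.card_coe]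
    _ = ENNReal.ofReal (√(gramDet (colSub X S0))) * ∫⁻ Q : ↥S0 → ℝ, ENNReal.ofReal CC * ENNReal.ofReal (Real.exp (-1 * enr (colSub X S0 *ᵥ (Q - b)) ^ 2)) := by
        rw [lintegral_const_mul' _ _ ENNReal.ofReal_ne_top,
          lintegral_sub_right_eq_self (fun Q => ENNReal.ofReal (Real.exp (-1 * enr (colSub X S0 *ᵥ Q) ^ 2))) b]
        ring
    _ ≤ _ := by
        gcongr with Q
        rw [← ENNReal.ofReal_mul hCC0.le]
        exact ENNReal.ofReal_le_ofReal (pt Q)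

lemma mm_A (D lam K : ℝ) (hl : 0 < lam) (hK : 0 < K)
    (hD : 4 * (3 * lam ^ 2 + 3 * K + 3 * lam + lam⁻¹ + 7) ≤ D) (W θ : Fin n → ℝ) (hW : goodW X K W)
    (S S0 : Finset (Fin p)) (hS : S.Nonempty) (hS0 : S0.Nonempty) (hg : 0 < gramDet (colSub X S))
    (hg0 : 0 < gramDet (colSub X S0)) (h2 : 2 * S0.card ≤ S.card)
    (b : ↥S0 → ℝ) (hb : θ = colSub X S0 *ᵥ b) :
    mm X D lam (θ + W) S Set.univ ≤
      ENNReal.ofReal ((Nc X S.card : ℝ)⁻¹ * Real.exp (-6 * psi p S.card)) * mm X D lam (θ + W) S0 Set.univ := by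
  have up := lin_up lam K hl hK W θ hW S S0 hS hS0 hg b hb
  have lo := lin_low lam K hl hK W θ hW S0 hS0 hg0 b hb
  have n1 : (0 : ℝ) < Nc X S.card := by exact_mod_cast Nc_pos S hg
  have n2 : (0 : ℝ) < Nc X S0.card := by exact_mod_cast Nc_pos S0 hg0
  have n3 : (Nc X S0.card : ℝ) ≤ Real.exp (psi p S0.card) :=
    le_trans (by exact_mod_cast Nc_le_choose S0.card) (choose_le_psi hS0.card_pos (card_le_p _))
  have p1 := psi_two hS0.card_pos h2 (card_le_p S)
  have p2 := le_psi hS.card_pos (card_le_p S)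
  have p3 := le_psi hS0.card_pos (card_le_p S0)
  have hs1 : (1 : ℝ) ≤ S.card := by exact_mod_cast hS.card_pos
  have hs2 : (1 : ℝ) ≤ S0.card := by exact_mod_cast hS0.card_pos
  have hG : 0 < Gn θ W lam := Real.exp_pos _
  have hpi : 0 < √π := Real.sqrt_pos.2 Real.pi_pos
  set s := S.card
  set s0 := S0.card
  set a := psi p s
  set a0 := psi p s0
  set c := lam / √π with hc
  have hc0 : 0 < c := by positivity
  have L : mm X D lam (θ + W) S Set.univ ≤ ENNReal.ofReal (Real.exp (-(2 * D * a)) * (Nc X s : ℝ)⁻¹ * c ^ s *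
      (Gn θ W lam * Real.exp (2 * lam ^ 2 + K * (a + a0)) * √(π / (1/8)) ^ s)) := by
    unfold mm
    rw [cst_eq D lam S ⟨hS, hg⟩, ENNReal.ofReal_mul (by positivity : 0 ≤ Real.exp (-(2 * D * a)) * (Nc X s : ℝ)⁻¹ * c ^ s)]
    refine le_trans (le_of_eq ?_) (mul_le_mul_right up _)
    rw [← mul_assoc, ← ENNReal.ofReal_mul (by positivity)]
    congr 2; ring
  have R : ENNReal.ofReal (Real.exp (-(2 * D * a0)) * (Nc X s0 : ℝ)⁻¹ * c ^ s0 *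
      (Gn θ W lam * Real.exp (-lam ^ 2 - K * a0) * √(π / 1) ^ s0)) ≤ mm X D lam (θ + W) S0 Set.univ := by
    unfold mm
    rw [cst_eq D lam S0 ⟨hS0, hg0⟩, ENNReal.ofReal_mul (by positivity : 0 ≤ Real.exp (-(2 * D * a0)) * (Nc X s0 : ℝ)⁻¹ * c ^ s0)]
    refine le_trans (mul_le_mul_right lo _) (le_of_eq ?_)
    rw [← mul_assoc, ← ENNReal.ofReal_mul (by positivity)]
    congr 2; ring
  refine L.trans (le_trans ?_ (mul_le_mul_right R _))
  rw [← ENNReal.ofReal_mul (by positivity)]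
  apply ENNReal.ofReal_le_ofReal
  have e1 : c ^ s * √(π / (1/8)) ^ s ≤ Real.exp (3 * lam * a) := by
    have : c * √(π / (1/8)) = lam * √8 := by
      have : π / (1/8) = π * 8 := by ring
      rw [this, Real.sqrt_mul Real.pi_pos.le, hc]; field_simp
    have h8 : √8 ≤ 3 := by rw [Real.sqrt_le_left (by norm_num)]; norm_num
    rw [← mul_pow, this]
    calc (lam * √8) ^ s ≤ (Real.exp (3 * lam)) ^ s := by
          gcongr
          have := Real.add_one_le_exp (3 * lam)
          nlinarith
      _ = Real.exp (s * (3 * lam)) := by rw [Real.exp_nat_mul]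
      _ ≤ _ := by apply Real.exp_le_exp.2; nlinarith
  have e2 : Real.exp (-(lam⁻¹ * a0)) ≤ c ^ s0 * √(π / 1) ^ s0 := by
    have : c * √(π / 1) = lam := by rw [div_one, hc]; field_simp
    rw [← mul_pow, this]
    have h5 : Real.exp (-lam⁻¹) ≤ lam := by
      rw [Real.exp_neg, inv_le_comm₀ (Real.exp_pos _) hl]
      have := Real.add_one_le_exp (lam⁻¹); linarith
    calc Real.exp (-(lam⁻¹ * a0)) ≤ Real.exp (s0 * (-lam⁻¹)) := by
          apply Real.exp_le_exp.2
          have := mul_le_mul_of_nonneg_left p3 (inv_pos.2 hl).le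
          linarith
      _ = Real.exp (-lam⁻¹) ^ s0 := by rw [Real.exp_nat_mul]
      _ ≤ _ := by gcongr
  have e3 : Real.exp (-a0) ≤ (Nc X s0 : ℝ)⁻¹ := by
    rw [Real.exp_neg]; gcongr
  have hli := inv_pos.2 hl
  have e4 : Real.exp (-(2 * D * a)) * Real.exp (3 * lam * a) * Real.exp (2 * lam ^ 2 + K * (a + a0)) ≤
      Real.exp (-6 * a) * Real.exp (-(2 * D * a0)) * Real.exp (-a0) * Real.exp (-(lam⁻¹ * a0)) * Real.exp (-lam ^ 2 - K * a0) := by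
    simp only [← Real.exp_add]
    apply Real.exp_le_exp.2
    have ha1 : 1 ≤ a := by linarith
    have hlin := mul_le_mul_of_nonneg_right hD (by linarith : 0 ≤ a)
    have t1 : D * a0 ≤ D * (7 / 8 * a) := by
      apply mul_le_mul_of_nonneg_left p1
      have : 0 < 4 * (3 * lam ^ 2 + 3 * K + 3 * lam + lam⁻¹ + 7) := by positivity
      linarith
    have t2 : K * a0 ≤ K * (7 / 8 * a) := mul_le_mul_of_nonneg_left p1 hK.le
    have t3 : lam⁻¹ * a0 ≤ lam⁻¹ * (7 / 8 * a) := mul_le_mul_of_nonneg_left p1 hli.le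
    have t4 : lam ^ 2 ≤ lam ^ 2 * a := by nlinarith [sq_nonneg lam]
    have t5 : 0 ≤ K * a := by positivity
    have t6 : 0 ≤ lam⁻¹ * a := by positivity
    nlinarith
  calc _ = (Real.exp (-(2 * D * a)) * (c ^ s * √(π / (1/8)) ^ s) * Real.exp (2 * lam ^ 2 + K * (a + a0))) * ((Nc X s : ℝ)⁻¹ * Gn θ W lam) := by ring
    _ ≤ (Real.exp (-(2 * D * a)) * Real.exp (3 * lam * a) * Real.exp (2 * lam ^ 2 + K * (a + a0))) * ((Nc X s : ℝ)⁻¹ * Gn θ W lam) := by gcongr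
    _ ≤ (Real.exp (-6 * a) * Real.exp (-(2 * D * a0)) * Real.exp (-a0) * Real.exp (-(lam⁻¹ * a0)) * Real.exp (-lam ^ 2 - K * a0)) * ((Nc X s : ℝ)⁻¹ * Gn θ W lam) := by gcongr
    _ ≤ (Real.exp (-6 * a) * Real.exp (-(2 * D * a0)) * (Nc X s0 : ℝ)⁻¹ * (c ^ s0 * √(π / 1) ^ s0) * Real.exp (-lam ^ 2 - K * a0)) * ((Nc X s : ℝ)⁻¹ * Gn θ W lam) := by gcongr
    _ = _ := by ring

end part7

section part8

variable {n p : ℕ} {X : Matrix (Fin n) (Fin p) ℝ}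

lemma log_half (hp : 2 ≤ p) : 1 / 2 ≤ Real.log p := by
  have h : (2 : ℝ) ≤ p := by exact_mod_cast hp
  have := Real.log_le_log (by norm_num) h
  have := Real.log_two_gt_d9
  linarith

lemma noise_col (hp : 2 ≤ p) (hn : 0 < (n : ℝ)) (h1 : ∀ j, xcol X j ⬝ᵥ xcol X j = n) (K : ℝ) (hK : 0 < K)
    (W : Fin n → ℝ) (hW : goodW X K W) (k : Fin p) :
    |xcol X k ⬝ᵥ W| ≤ √(3 * K) * (n * √(Real.log p / n)) := by
  have hL := log_half hp
  have h := hW {k} (by simp) (fun _ => 1)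
  have e : colSub X {k} *ᵥ (fun _ => (1 : ℝ)) = xcol X k := by
    rw [colSub_mulVec_sum]
    simp
  have e2 : enr (xcol X k) = √n := by rw [← h1 k, ← enr_sq, Real.sqrt_sq (enr_nonneg _)]
  rw [e, e2, Finset.card_singleton, psi_one (by omega), dotProduct_comm] at h
  refine h.trans ?_
  have e3 : (n : ℝ) * √(Real.log p / n) = √(Real.log p) * √n := by
    rw [Real.sqrt_div (by linarith)]
    nth_rewrite 1 [← Real.mul_self_sqrt hn.le]
    have := Real.sqrt_pos.2 hn
    field_simp
  rw [e3, ← mul_assoc, ← Real.sqrt_mul (by positivity : 0 ≤ 3 * K)]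
  refine mul_le_mul_of_nonneg_right (Real.sqrt_le_sqrt ?_) (Real.sqrt_nonneg _)
  nlinarith

lemma nq (hp : 2 ≤ p) (hn : 0 < (n : ℝ)) : n * √(Real.log p / n) ^ 2 = Real.log p := by
  have hL := log_half hp
  rw [Real.sq_sqrt (by positivity)]; field_simp

lemma stepB (hp : 2 ≤ p) (τ : ℝ) (hτ : 0 < τ) (hn : 0 < (n : ℝ)) (h1 : ∀ j, xcol X j ⬝ᵥ xcol X j = n)
    (h2 : ∀ j l, j ≠ l → |xcol X j ⬝ᵥ xcol X l| ≤ n * τ) (K D lam : ℝ) (hK : 0 < K) (hl : 0 < lam) (hD : 0 < D)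
    (W : Fin n → ℝ) (hW : goodW X K W) (β : Fin p → ℝ)
    (hs : τ * ((Finset.univ.filter fun j => β j ≠ 0).card : ℝ) ≤ 1 / 9)
    (A1 M1 : ℝ) (hA1 : 0 < A1) (hA : 8 * (6 * D + 7 + 2 * lam⁻¹ + 3 * lam ^ 2) ≤ A1 ^ 2)
    (hM : 4 * (2 * √(3 * K) + A1) ≤ M1)
    (S : Finset (Fin p)) (hS : S.Nonempty) (hg : 0 < gramDet (colSub X S)) (hc : (S.card : ℝ) * τ ≤ 2 / 9)
    (hex : ∃ j, j ∉ S ∧ M1 * √(Real.log p / n) < |β j|) :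
    ∃ j, j ∉ S ∧ mm X D lam (X *ᵥ β + W) S Set.univ ≤
      ENNReal.ofReal (Real.exp (-6 * Real.log p)) * mm X D lam (X *ᵥ β + W) (insert j S) Set.univ := by
  obtain ⟨j0, hj0, hb0⟩ := hex
  have hL := log_half hp
  have hp0 : (0 : ℝ) < p := by exact_mod_cast (by omega : 0 < p)
  obtain ⟨j, hjm, hmax⟩ := Finset.exists_max_image (Finset.univ.filter fun j => j ∉ S) (fun j => |β j|)
    ⟨j0, by simp [hj0]⟩
  have hj : j ∉ S := by simpa using hjm
  have hbj : M1 * √(Real.log p / n) < |β j| := hb0.trans_le (hmax j0 (by simp [hj0]))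
  refine ⟨j, hj, ?_⟩
  obtain ⟨a, r, hr, ho, hr1, hr2, hxr, hok, hw, hk⟩ := geom X τ hτ hn h1 h2 S j hj hg hc
  have hrr : 0 < r ⬝ᵥ r := by linarith
  set q := √(Real.log p / n) with hq
  have hq0 : 0 ≤ q := Real.sqrt_nonneg _
  have hnq : n * q ^ 2 = Real.log p := nq hp hn
  have hB := hw W _ (noise_col hp hn h1 K hK W hW)
  have hb := hbound X τ hτ hn S j hj r W β _ |β j| (abs_nonneg _) hxr hok hB hk
    (fun k hk _ => hmax k (by simp [hk])) hs
  have hy : A1 * (n * q) ≤ |(X *ᵥ β + W) ⬝ᵥ r| := by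
    have e1 : |β j * (r ⬝ᵥ r)| = |β j| * (r ⬝ᵥ r) := by rw [abs_mul, abs_of_pos hrr]
    have e2 : |β j * (r ⬝ᵥ r)| ≤ |(X *ᵥ β + W) ⬝ᵥ r| + |(X *ᵥ β + W) ⬝ᵥ r - β j * (r ⬝ᵥ r)| := by
      have := abs_sub_abs_le_abs_sub (β j * (r ⬝ᵥ r)) ((X *ᵥ β + W) ⬝ᵥ r)
      rw [abs_sub_comm] at this; linarith
    have e3 : |β j| * (n / 2) ≤ |β j| * (r ⬝ᵥ r) := by gcongr
    have e4 : M1 * (n * q) ≤ |β j| * n := by nlinarith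
    have e5 : 4 * (2 * √(3 * K) + A1) * (n * q) ≤ M1 * (n * q) := by gcongr
    have e6 : 0 ≤ |β j| * n := by positivity
    nlinarith
  have hy2 : A1 ^ 2 * Real.log p / 2 ≤ ((X *ᵥ β + W) ⬝ᵥ r) ^ 2 / (r ⬝ᵥ r) := by
    rw [le_div_iff₀ hrr, ← sq_abs ((X *ᵥ β + W) ⬝ᵥ r)]
    have : (A1 * (n * q)) ^ 2 ≤ |(X *ᵥ β + W) ⬝ᵥ r| ^ 2 := by gcongr
    refine le_trans ?_ this
    have e : (A1 * (n * q)) ^ 2 = A1 ^ 2 * Real.log p / 2 * (2 * n) := by rw [← hnq]; ring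
    rw [e]
    gcongr
  refine (mm_B (X *ᵥ β + W) D lam hl S (insert j S) j hj rfl a r hS hg hr ho hrr).trans ?_
  refine mul_le_mul_left (ENNReal.ofReal_le_ofReal ?_) _
  have hcard : S.card + 1 ≤ p := by
    rw [← Finset.card_insert_of_notMem hj]; exact card_le_p _
  have hpsi := psi_succ hS.card_pos hcard
  have hli := inv_pos.2 hl
  calc Real.exp (2 * D * (psi p (S.card + 1) - psi p S.card)) * p * lam⁻¹ *
        Real.exp (3 / 2 * lam ^ 2 - ((X *ᵥ β + W) ⬝ᵥ r) ^ 2 / (r ⬝ᵥ r) / 4)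
      ≤ Real.exp (2 * D * (psi p (S.card + 1) - psi p S.card)) * Real.exp (Real.log p) * Real.exp (lam⁻¹) *
        Real.exp (3 / 2 * lam ^ 2 - ((X *ᵥ β + W) ⬝ᵥ r) ^ 2 / (r ⬝ᵥ r) / 4) := by
        rw [Real.exp_log hp0]
        gcongr
        have := Real.add_one_le_exp (lam⁻¹); linarith
    _ ≤ _ := by
        simp only [← Real.exp_add]
        apply Real.exp_le_exp.2
        have t1 : D * (psi p (S.card + 1) - psi p S.card) ≤ D * (3 * Real.log p) := by
          gcongr; linarith
        have t2 := mul_le_mul_of_nonneg_right hA (by linarith : 0 ≤ Real.log p)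
        have t3 : lam⁻¹ * 1 ≤ lam⁻¹ * (2 * Real.log p) := by gcongr; linarith
        have t4 : lam ^ 2 * 1 ≤ lam ^ 2 * (2 * Real.log p) := by gcongr; linarith
        nlinarith

lemma stepC (hp : 2 ≤ p) (τ : ℝ) (hτ : 0 < τ) (hn : 0 < (n : ℝ)) (h1 : ∀ j, xcol X j ⬝ᵥ xcol X j = n)
    (h2 : ∀ j l, j ≠ l → |xcol X j ⬝ᵥ xcol X l| ≤ n * τ) (K D lam : ℝ) (hK : 0 < K) (hl : 0 < lam)
    (W : Fin n → ℝ) (hW : goodW X K W) (β : Fin p → ℝ)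
    (hs : τ * ((Finset.univ.filter fun j => β j ≠ 0).card : ℝ) ≤ 1 / 9)
    (A2 M1 M : ℝ) (hM1 : 0 < M1) (hA2 : 0 < A2) (hA : 16 * (10 + 3 * lam ^ 2) ≤ A2 ^ 2)
    (hM : M1 + 4 * √(3 * K) + A2 ≤ M)
    (S : Finset (Fin p)) (hg : 0 < gramDet (colSub X S)) (hc : ((S.card : ℝ) - 1) * τ ≤ 2 / 9)
    (hex : ∀ j, j ∉ S → |β j| ≤ M1 * √(Real.log p / n)) :
    mm X D lam (X *ᵥ β + W) S {Q | M * √(Real.log p / n) < ⨆ j, |sparseVec S Q j - β j|} ≤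
      ENNReal.ofReal (Real.exp (-5 * Real.log p)) * mm X D lam (X *ᵥ β + W) S Set.univ := by
  have hL := log_half hp
  have hp0 : (0 : ℝ) < p := by exact_mod_cast (by omega : 0 < p)
  set q := √(Real.log p / n) with hq
  have hq0 : 0 ≤ q := Real.sqrt_nonneg _
  have hnq : n * q ^ 2 = Real.log p := nq hp hn
  have hsK := Real.sqrt_nonneg (3 * K)
  have hMM : M1 ≤ M := by linarith
  have : Nonempty (Fin p) := ⟨⟨0, by omega⟩⟩
  set Y := X *ᵥ β + W with hY
  have hj : ∀ j : ↥S, lin X lam Y S {Q | Q ⟨j.1, j.2⟩ ∈ {t : ℝ | M * q < |t - β j|}} ≤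
      ENNReal.ofReal (Real.exp (-6 * Real.log p)) * lin X lam Y S Set.univ := by
    rintro ⟨j, hjS⟩
    have hjR : j ∉ S.erase j := by simp
    have hgR := gram_subset (X := X) (S.erase j) S (Finset.erase_subset _ _) hg
    have hcR : ((S.erase j).card : ℝ) * τ ≤ 2 / 9 := by
      rw [Finset.card_erase_of_mem hjS, Nat.cast_sub (Finset.card_pos.2 ⟨j, hjS⟩)]
      simpa using hc
    obtain ⟨a, r, hr, ho, hr1, hr2, hxr, hok, hw, hk⟩ := geom X τ hτ hn h1 h2 (S.erase j) j hjR hgR hcR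
    have hrr : 0 < r ⬝ᵥ r := by linarith
    have hB := hw W _ (noise_col hp hn h1 K hK W hW)
    have hb := hbound X τ hτ hn (S.erase j) j hjR r W β _ (M1 * q) (by positivity) hxr hok hB hk
      (fun k hk hkj => hex k (fun h => hk (Finset.mem_erase.2 ⟨hkj, h⟩))) hs
    have ht0 : |(Y ⬝ᵥ r) / (r ⬝ᵥ r) - β j| ≤ (M1 + 4 * √(3 * K)) * q := by
      have e : (Y ⬝ᵥ r) / (r ⬝ᵥ r) - β j = (Y ⬝ᵥ r - β j * (r ⬝ᵥ r)) / (r ⬝ᵥ r) := by field_simp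
      rw [e, abs_div, abs_of_pos hrr, div_le_iff₀ hrr]
      refine hb.trans ?_
      have : (M1 + 4 * √(3 * K)) * q * (n / 2) ≤ (M1 + 4 * √(3 * K)) * q * (r ⬝ᵥ r) := by gcongr
      refine le_trans ?_ this
      have : 0 ≤ n * (M1 * q) := by positivity
      rw [← hq]
      nlinarith
    have hρ : ∀ t ∈ {t : ℝ | M * q < |t - β j|}, A2 ^ 2 * Real.log p / 2 ≤ (r ⬝ᵥ r) * (t - (Y ⬝ᵥ r) / (r ⬝ᵥ r)) ^ 2 := by
      intro t ht
      have ht : M * q < |t - β j| := ht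
      have e1 : |t - β j| ≤ |t - (Y ⬝ᵥ r) / (r ⬝ᵥ r)| + |(Y ⬝ᵥ r) / (r ⬝ᵥ r) - β j| := abs_sub_le _ _ _
      have e2 : (M1 + 4 * √(3 * K) + A2) * q ≤ M * q := by gcongr
      have e3 : A2 * q ≤ |t - (Y ⬝ᵥ r) / (r ⬝ᵥ r)| := by linarith
      rw [← sq_abs (t - _)]
      calc A2 ^ 2 * Real.log p / 2 = n / 2 * (A2 * q) ^ 2 := by rw [← hnq]; ring
        _ ≤ _ := by gcongr
    have hmB : MeasurableSet {t : ℝ | M * q < |t - β j|} :=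
      measurableSet_lt measurable_const (by fun_prop)
    refine (lin_C Y lam hl (S.erase j) S j hjR (Finset.insert_erase hjS).symm hjS a r hr ho hrr _ hmB _ hρ).trans ?_
    refine mul_le_mul_left (ENNReal.ofReal_le_ofReal ?_) _
    have h8 : √8 ≤ Real.exp 2 := by
      have h9 : √8 ≤ 3 := by rw [Real.sqrt_le_left (by norm_num)]; norm_num
      have := Real.add_one_le_exp 2
      linarith
    calc √8 * Real.exp (3 / 2 * lam ^ 2 - A2 ^ 2 * Real.log p / 2 / 8) ≤ Real.exp 2 * Real.exp (3 / 2 * lam ^ 2 - A2 ^ 2 * Real.log p / 2 / 8) := by gcongr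
      _ ≤ _ := by
        rw [← Real.exp_add]
        apply Real.exp_le_exp.2
        have t2 := mul_le_mul_of_nonneg_right hA (by linarith : 0 ≤ Real.log p)
        have t4 : lam ^ 2 * 1 ≤ lam ^ 2 * (2 * Real.log p) := by gcongr; linarith
        nlinarith
  have hsub : {Q : ↥S → ℝ | M * q < ⨆ j, |sparseVec S Q j - β j|} ⊆
      ⋃ j : ↥S, {Q | Q ⟨j.1, j.2⟩ ∈ {t : ℝ | M * q < |t - β j|}} := by
    intro Q hQ
    by_contra hcon
    simp only [Set.mem_iUnion, not_exists] at hcon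
    have hQ : M * q < ⨆ j, |sparseVec S Q j - β j| := hQ
    refine absurd hQ (not_lt.2 (ciSup_le fun j => ?_))
    unfold sparseVec
    split_ifs with h
    · exact not_lt.1 (hcon ⟨j, h⟩)
    · rw [zero_sub, abs_neg]
      exact (hex j h).trans (by gcongr)
  have key : lin X lam Y S {Q : ↥S → ℝ | M * q < ⨆ j, |sparseVec S Q j - β j|} ≤
      ENNReal.ofReal (Real.exp (-5 * Real.log p)) * lin X lam Y S Set.univ := by
    calc lin X lam Y S {Q : ↥S → ℝ | M * q < ⨆ j, |sparseVec S Q j - β j|}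
        ≤ lin X lam Y S (⋃ j : ↥S, {Q | Q ⟨j.1, j.2⟩ ∈ {t : ℝ | M * q < |t - β j|}}) := lintegral_mono_set hsub
      _ ≤ ∑' j : ↥S, lin X lam Y S {Q | Q ⟨j.1, j.2⟩ ∈ {t : ℝ | M * q < |t - β j|}} := lintegral_iUnion_le _ _
      _ = ∑ j : ↥S, lin X lam Y S {Q | Q ⟨j.1, j.2⟩ ∈ {t : ℝ | M * q < |t - β j|}} := tsum_fintype _
      _ ≤ ∑ j : ↥S, ENNReal.ofReal (Real.exp (-6 * Real.log p)) * lin X lam Y S Set.univ := Finset.sum_le_sum fun j _ => hj j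
      _ = (S.card : ℝ≥0∞) * ENNReal.ofReal (Real.exp (-6 * Real.log p)) * lin X lam Y S Set.univ := by
        rw [Finset.sum_const, nsmul_eq_mul, mul_assoc]; simp
      _ ≤ _ := by
        gcongr
        rw [← ENNReal.ofReal_natCast, ← ENNReal.ofReal_mul (by positivity)]
        apply ENNReal.ofReal_le_ofReal
        have : (S.card : ℝ) ≤ Real.exp (Real.log p) := by rw [Real.exp_log hp0]; exact_mod_cast card_le_p S
        calc _ ≤ Real.exp (Real.log p) * Real.exp (-6 * Real.log p) := by gcongr
          _ = _ := by rw [← Real.exp_add]; congr 1; ring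
  unfold mm
  calc _ ≤ ENNReal.ofReal (cst X D lam S) * (ENNReal.ofReal (Real.exp (-5 * Real.log p)) * lin X lam Y S Set.univ) := by gcongr
    _ = _ := by ring

end part8

section part9

variable {n p : ℕ} {X : Matrix (Fin n) (Fin p) ℝ}

lemma sumA (hp0 : 0 < p) (T : ℝ≥0∞) :
    ∑ S : Finset (Fin p), (if S.Nonempty ∧ 0 < gramDet (colSub X S) then
      ENNReal.ofReal ((Nc X S.card : ℝ)⁻¹ * Real.exp (-6 * Real.log p)) * T else 0) ≤
      ENNReal.ofReal (Real.exp (-5 * Real.log p)) * T := by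
  have hp : (0 : ℝ) < p := by exact_mod_cast hp0
  rw [← Finset.sum_filter, ← Finset.sum_mul]
  refine mul_le_mul_left ?_ _
  rw [← Finset.sum_fiberwise_of_maps_to (t := Finset.Icc 1 p) (g := fun S : Finset (Fin p) => S.card)
    (fun S hS => by
      simp only [Finset.mem_filter] at hS
      rw [Finset.mem_Icc]; exact ⟨hS.2.1.card_pos, card_le_p S⟩)]
  have hs : ∀ s ∈ Finset.Icc 1 p, ∑ S ∈ (Finset.univ.filter fun S : Finset (Fin p) => S.Nonempty ∧ 0 < gramDet (colSub X S)).filter (fun S => S.card = s),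
      ENNReal.ofReal ((Nc X S.card : ℝ)⁻¹ * Real.exp (-6 * Real.log p)) ≤ ENNReal.ofReal (Real.exp (-6 * Real.log p)) := by
    intro s _
    have hb : ∀ S ∈ (Finset.univ.filter fun S : Finset (Fin p) => S.Nonempty ∧ 0 < gramDet (colSub X S)).filter (fun S => S.card = s),
      ENNReal.ofReal ((Nc X S.card : ℝ)⁻¹ * Real.exp (-6 * Real.log p)) ≤ ENNReal.ofReal ((Nc X s : ℝ)⁻¹ * Real.exp (-6 * Real.log p)) := by
      intro S hS
      rw [(Finset.mem_filter.1 hS).2]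
    refine (Finset.sum_le_card_nsmul _ _ _ hb).trans ?_
    have hcard : ((Finset.univ.filter fun S : Finset (Fin p) => S.Nonempty ∧ 0 < gramDet (colSub X S)).filter (fun S => S.card = s)).card ≤ Nc X s := by
      unfold Nc
      apply Finset.card_le_card
      intro S hS
      simp only [Finset.mem_filter, Finset.mem_univ, true_and] at hS ⊢
      exact ⟨hS.2, hS.1.2⟩
    rw [nsmul_eq_mul, ← ENNReal.ofReal_natCast, ← ENNReal.ofReal_mul (by positivity)]
    apply ENNReal.ofReal_le_ofReal
    rw [← mul_assoc]
    have : (((Finset.univ.filter fun S : Finset (Fin p) => S.Nonempty ∧ 0 < gramDet (colSub X S)).filter (fun S => S.card = s)).card : ℝ) * (Nc X s : ℝ)⁻¹ ≤ 1 := by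
      rw [← div_eq_mul_inv]
      apply div_le_one_of_le₀ (by exact_mod_cast hcard) (by positivity)
    have h0 := (Real.exp_pos (-6 * Real.log p)).le
    nlinarith
  refine (Finset.sum_le_card_nsmul _ _ _ hs).trans ?_
  rw [nsmul_eq_mul, ← ENNReal.ofReal_natCast, ← ENNReal.ofReal_mul (by positivity)]
  apply ENNReal.ofReal_le_ofReal
  simp only [Nat.card_Icc, add_tsub_cancel_right]
  nth_rewrite 1 [← Real.exp_log hp]
  rw [← Real.exp_add]
  apply Real.exp_le_exp.2; linarith

lemma sumB (hp0 : 0 < p) (f : Finset (Fin p) → ℝ≥0∞) :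
    ∑ S : Finset (Fin p), ∑ j : Fin p, (if j ∉ S then ENNReal.ofReal (Real.exp (-6 * Real.log p)) * f (insert j S) else 0)
     ≤ ENNReal.ofReal (Real.exp (-5 * Real.log p)) * ∑ S, f S := by
  have hp : (0 : ℝ) < p := by exact_mod_cast hp0
  rw [Finset.sum_comm]
  have hb : ∀ j ∈ (Finset.univ : Finset (Fin p)), ∑ S : Finset (Fin p), (if j ∉ S then ENNReal.ofReal (Real.exp (-6 * Real.log p)) * f (insert j S) else 0)
      ≤ ENNReal.ofReal (Real.exp (-6 * Real.log p)) * ∑ S, f S := by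
    intro j _
    rw [← Finset.sum_filter, ← Finset.mul_sum]
    refine mul_le_mul_right ?_ _
    rw [← Finset.sum_image (s := Finset.univ.filter fun S : Finset (Fin p) => j ∉ S) (g := fun S => insert j S) (f := f)]
    · exact Finset.sum_le_sum_of_subset (Finset.subset_univ _)
    · intro S hS T hT h
      simp only [Finset.coe_filter, Finset.mem_univ, true_and, Set.mem_ofPred_eq] at hS hT
      have := congrArg (fun U => Finset.erase U j) h
      simpa [Finset.erase_insert hS, Finset.erase_insert hT] using this
  refine (Finset.sum_le_card_nsmul _ _ _ hb).trans ?_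
  rw [nsmul_eq_mul, ← mul_assoc, ← ENNReal.ofReal_natCast, ← ENNReal.ofReal_mul (by positivity)]
  refine mul_le_mul_left (ENNReal.ofReal_le_ofReal ?_) _
  rw [Finset.card_univ, Fintype.card_fin]
  nth_rewrite 1 [← Real.exp_log hp]
  rw [← Real.exp_add]
  apply Real.exp_le_exp.2; linarith

lemma mm_zero (D lam : ℝ) (Y : Fin n → ℝ) (S : Finset (Fin p)) (B : Set (↥S → ℝ))
    (h : ¬ (S.Nonempty ∧ 0 < gramDet (colSub X S))) : mm X D lam Y S B = 0 := by
  unfold mm; rw [cst_zero D lam S h]; simp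

lemma mm_mono (D lam : ℝ) (Y : Fin n → ℝ) (S : Finset (Fin p)) (B : Set (↥S → ℝ)) :
    mm X D lam Y S B ≤ mm X D lam Y S Set.univ := by
  unfold mm lin
  gcongr
  exact Set.subset_univ _

lemma true_model (hp : 2 ≤ p) (τ : ℝ) (hτ : 0 < τ) (hn : 0 < (n : ℝ)) (h1 : ∀ j, xcol X j ⬝ᵥ xcol X j = n)
    (h2 : ∀ j l, j ≠ l → |xcol X j ⬝ᵥ xcol X l| ≤ n * τ) (β : Fin p → ℝ)
    (hs : τ * ((Finset.univ.filter fun j => β j ≠ 0).card : ℝ) ≤ 1 / 9) :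
    ∃ S0 : Finset (Fin p), S0.Nonempty ∧ 0 < gramDet (colSub X S0) ∧ (∃ b, X *ᵥ β = colSub X S0 *ᵥ b) ∧
      (∀ S : Finset (Fin p), S.card < 2 * S0.card → ((S.card : ℝ) - 1) * τ ≤ 2 / 9 ∧
        (∀ j, β j ≠ 0 → (S.card : ℝ) * τ ≤ 2 / 9)) := by
  set A := Finset.univ.filter fun j => β j ≠ 0 with hA
  have key : ∀ S0 : Finset (Fin p), A ⊆ S0 → ((S0.card : ℝ) - 1) * τ < 1 → 0 < gramDet (colSub X S0) ∧ (∃ b, X *ᵥ β = colSub X S0 *ᵥ b) := by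
    intro S0 hsub hc
    refine ⟨gram_pos_of_inj _ fun Q hQ => coh_inj X τ hn h1 h2 S0 hc Q hQ, fun k => β k, ?_⟩
    rw [colSub_mulVec_sum, mulVec_sum, Finset.sum_coe_sort S0 (fun k => β k • xcol X k)]
    symm
    apply Finset.sum_subset (Finset.subset_univ _)
    intro k _ hk
    have : β k = 0 := by
      by_contra h
      exact hk (hsub (by simp [hA, h]))
    simp [this]
  rcases A.eq_empty_or_nonempty with he | hne
  · obtain ⟨j0⟩ : Nonempty (Fin p) := ⟨⟨0, by omega⟩⟩
    obtain ⟨g1, g2⟩ := key {j0} (by rw [he]; exact Finset.empty_subset _) (by rw [Finset.card_singleton]; norm_num)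
    refine ⟨{j0}, Finset.singleton_nonempty _, g1, g2, fun S hS => ⟨?_, fun j hj => ?_⟩⟩
    · have : S.card ≤ 1 := by rw [Finset.card_singleton] at hS; omega
      have : (S.card : ℝ) ≤ 1 := by exact_mod_cast this
      nlinarith
    · exfalso
      have : j ∈ A := by simp [hA, hj]
      rw [he] at this; simp at this
  · obtain ⟨g1, g2⟩ := key A le_rfl (by linarith)
    refine ⟨A, hne, g1, g2, fun S hS => ?_⟩
    have : (S.card : ℝ) ≤ 2 * A.card := by exact_mod_cast hS.le
    have : (S.card : ℝ) * τ ≤ 2 / 9 := by nlinarith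
    exact ⟨by linarith, fun _ _ => this⟩

lemma main_sum (hp : 2 ≤ p) (τ : ℝ) (hτ : 0 < τ) (hn : 0 < (n : ℝ)) (h1 : ∀ j, xcol X j ⬝ᵥ xcol X j = n)
    (h2 : ∀ j l, j ≠ l → |xcol X j ⬝ᵥ xcol X l| ≤ n * τ) (K D lam : ℝ) (hK : 0 < K) (hl : 0 < lam)
    (hD : 4 * (3 * lam ^ 2 + 3 * K + 3 * lam + lam⁻¹ + 7) ≤ D)
    (W : Fin n → ℝ) (hW : goodW X K W) (β : Fin p → ℝ)
    (hs : τ * ((Finset.univ.filter fun j => β j ≠ 0).card : ℝ) ≤ 1 / 9)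
    (A1 A2 M1 M : ℝ) (hA1 : 0 < A1) (hA : 8 * (6 * D + 7 + 2 * lam⁻¹ + 3 * lam ^ 2) ≤ A1 ^ 2)
    (hM1 : 4 * (2 * √(3 * K) + A1) ≤ M1) (hA2 : 0 < A2) (hA' : 16 * (10 + 3 * lam ^ 2) ≤ A2 ^ 2)
    (hM : M1 + 4 * √(3 * K) + A2 ≤ M) :
    ∑ S, mm X D lam (X *ᵥ β + W) S {Q | M * √(Real.log p / n) < ⨆ j, |sparseVec S Q j - β j|} ≤
      ENNReal.ofReal (3 * Real.exp (-5 * Real.log p)) * ∑ S, mm X D lam (X *ᵥ β + W) S Set.univ := by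
  obtain ⟨S0, hS0, hg0, ⟨b, hb⟩, hcard⟩ := true_model hp τ hτ hn h1 h2 β hs
  have hL := log_half hp
  have hli := inv_pos.2 hl
  have hD0 : 0 < D := by
    have : 0 < 4 * (3 * lam ^ 2 + 3 * K + 3 * lam + lam⁻¹ + 7) := by positivity
    linarith
  have hM10 : 0 < M1 := by have := Real.sqrt_nonneg (3 * K); linarith
  set Y := X *ᵥ β + W with hY
  set e5 := ENNReal.ofReal (Real.exp (-5 * Real.log p)) with he5
  set Tot := ∑ S, mm X D lam Y S Set.univ with hTot
  have pt : ∀ S ∈ (Finset.univ : Finset (Finset (Fin p))), mm X D lam Y S {Q | M * √(Real.log p / n) < ⨆ j, |sparseVec S Q j - β j|} ≤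
      (if S.Nonempty ∧ 0 < gramDet (colSub X S) then
        ENNReal.ofReal ((Nc X S.card : ℝ)⁻¹ * Real.exp (-6 * Real.log p)) * mm X D lam Y S0 Set.univ else 0)
      + (∑ j : Fin p, (if j ∉ S then ENNReal.ofReal (Real.exp (-6 * Real.log p)) * mm X D lam Y (insert j S) Set.univ else 0))
      + e5 * mm X D lam Y S Set.univ := by
    intro S _
    by_cases h : S.Nonempty ∧ 0 < gramDet (colSub X S)
    swap
    · rw [mm_zero D lam Y S _ h]; exact zero_le
    obtain ⟨hS, hg⟩ := h
    rcases le_or_gt (2 * S0.card) S.card with hc | hc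
    · refine le_trans ?_ (le_add_right (le_add_right le_rfl))
      rw [if_pos ⟨hS, hg⟩]
      refine (mm_mono D lam Y S _).trans ((mm_A D lam K hl hK hD W _ hW S S0 hS hS0 hg hg0 hc b hb).trans ?_)
      refine mul_le_mul_left (ENNReal.ofReal_le_ofReal ?_) _
      have := log_le_psi hS.card_pos (card_le_p S)
      gcongr 1
      apply Real.exp_le_exp.2; linarith
    · obtain ⟨c1, c2⟩ := hcard S hc
      by_cases hex : ∃ j, j ∉ S ∧ M1 * √(Real.log p / n) < |β j|
      · have hc2 : (S.card : ℝ) * τ ≤ 2 / 9 := by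
          obtain ⟨j, -, hj⟩ := hex
          apply c2 j
          intro h0
          rw [h0, abs_zero] at hj
          have := Real.sqrt_nonneg (Real.log p / n)
          nlinarith
        obtain ⟨j, hj, hjm⟩ := stepB hp τ hτ hn h1 h2 K D lam hK hl hD0 W hW β hs A1 M1 hA1 hA hM1 S hS hg hc2 hex
        refine le_trans ?_ (le_add_right (le_add_left le_rfl))
        refine (mm_mono D lam Y S _).trans (hjm.trans ?_)
        refine le_trans (le_of_eq ?_) (Finset.single_le_sum (f := fun j => if j ∉ S then ENNReal.ofReal (Real.exp (-6 * Real.log p)) * mm X D lam Y (insert j S) Set.univ else 0) (fun _ _ => zero_le) (Finset.mem_univ j))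
        rw [if_pos hj]
      · push Not at hex
        exact le_trans (stepC hp τ hτ hn h1 h2 K D lam hK hl W hW β hs A2 M1 M hM10 hA2 hA' hM S hg c1 hex)
          (le_add_left le_rfl)
  refine (Finset.sum_le_sum pt).trans ?_
  rw [Finset.sum_add_distrib, Finset.sum_add_distrib, ← Finset.mul_sum]
  have a1 := sumA (X := X) (by omega : 0 < p) (mm X D lam Y S0 Set.univ)
  have a2 := sumB (by omega : 0 < p) (fun S => mm X D lam Y S Set.univ)
  have a3 : mm X D lam Y S0 Set.univ ≤ Tot :=
    Finset.single_le_sum (f := fun S => mm X D lam Y S Set.univ) (fun _ _ => zero_le) (Finset.mem_univ S0)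
  calc _ ≤ e5 * Tot + e5 * Tot + e5 * Tot := by
        gcongr
        exact a1.trans (by gcongr)
    _ = _ := by
        rw [ENNReal.ofReal_mul (by norm_num), ← he5]
        simp
        ring

end part9

section part10

lemma integ_bound {Ω : Type} [MeasurableSpace Ω] (P : Measure Ω) [IsProbabilityMeasure P] (f : Ω → ℝ)
    (Bad : Set Ω) (δ ε : ℝ) (hδ : 0 ≤ δ) (hε : 0 ≤ ε) (hf1 : ∀ ω, f ω ≤ 1) (hf : ∀ ω, ω ∉ Bad → f ω ≤ δ)
    (hB : P Bad ≤ ENNReal.ofReal ε) : ∫ ω, f ω ∂P ≤ δ + ε := by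
  by_cases hi : Integrable f P
  swap
  · rw [integral_undef hi]; positivity
  set T := toMeasurable P Bad
  have hT : MeasurableSet T := measurableSet_toMeasurable _ _
  have hTi : Integrable (T.indicator fun _ => (1 : ℝ)) P := (integrable_const 1).indicator hT
  calc ∫ ω, f ω ∂P ≤ ∫ ω, (δ + T.indicator (fun _ => (1 : ℝ)) ω) ∂P := by
        apply integral_mono hi ((integrable_const δ).add hTi)
        intro ω
        show f ω ≤ δ + T.indicator (fun _ => (1 : ℝ)) ω
        by_cases h : ω ∈ Bad
        · have : ω ∈ T := subset_toMeasurable _ _ h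
          rw [Set.indicator_of_mem this]
          linarith [hf1 ω]
        · have := hf ω h
          have h2 : 0 ≤ T.indicator (fun _ => (1 : ℝ)) ω := Set.indicator_nonneg (fun _ _ => zero_le_one) _
          linarith
    _ = δ + (P Bad).toReal := by
        rw [integral_add (integrable_const δ) hTi, integral_indicator hT]
        simp [Measure.real, T]
    _ ≤ _ := by
        gcongr
        exact ENNReal.toReal_le_of_le_ofReal hε hB

variable {n p : ℕ} {X : Matrix (Fin n) (Fin p) ℝ}

lemma lin_ne_top (lam : ℝ) (hl : 0 < lam) (Y : Fin n → ℝ) (S : Finset (Fin p)) (hg : 0 < gramDet (colSub X S)) :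
    lin X lam Y S Set.univ ≠ ⊤ := by
  unfold lin
  rw [Measure.restrict_univ]
  have pt : ∀ Q : ↥S → ℝ, gf Y lam (colSub X S *ᵥ Q) ≤ Gn 0 Y lam * Real.exp (2 * lam ^ 2 + enr Y ^ 2) * Real.exp (-(1/8) * enr (colSub X S *ᵥ Q) ^ 2) := by
    intro Q
    have := gf_up 0 Y (colSub X S *ᵥ Q) lam hl (enr Y ^ 2) (by positivity) (by
      rw [Real.sqrt_sq (enr_nonneg _)]; exact abs_dot_le _ _)
    simpa using this
  have hi : Integrable (fun Q : ↥S → ℝ => Gn 0 Y lam * Real.exp (2 * lam ^ 2 + enr Y ^ 2) * Real.exp (-(1/8) * enr (colSub X S *ᵥ Q) ^ 2)) :=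
    (gauss_integrable (colSub X S) hg (by norm_num)).const_mul _
  refine ((lintegral_mono fun Q => ENNReal.ofReal_le_ofReal (pt Q)).trans_lt ?_).ne
  exact hi.lintegral_lt_top

lemma mm_ne_top (D lam : ℝ) (hl : 0 < lam) (Y : Fin n → ℝ) (S : Finset (Fin p)) (B : Set (↥S → ℝ)) :
    mm X D lam Y S B ≠ ⊤ := by
  by_cases h : S.Nonempty ∧ 0 < gramDet (colSub X S)
  · refine ne_top_of_le_ne_top ?_ (mm_mono D lam Y S B)
    exact ENNReal.mul_ne_top ENNReal.ofReal_ne_top (lin_ne_top lam hl Y S h.2)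
  · rw [mm_zero D lam Y S B h]; simp

lemma mm_toReal (D lam : ℝ) (hl : 0 < lam) (Y : Fin n → ℝ) (S : Finset (Fin p)) (B : Set (↥S → ℝ)) :
    (mm X D lam Y S B).toReal = cst X D lam S * ∫ Q in B, gf Y lam (colSub X S *ᵥ Q) := by
  unfold mm lin
  rw [ENNReal.toReal_mul, ENNReal.toReal_ofReal (cst_nonneg D hl S), integral_eq_lintegral_of_nonneg_ae]
  · exact Filter.Eventually.of_forall fun _ => (gf_pos _ _ _).le
  · have : Continuous fun Q : ↥S → ℝ => gf Y lam (colSub X S *ᵥ Q) :=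
      (continuous_gf Y lam).comp (by fun_prop)
    exact this.aestronglyMeasurable

lemma post_eq (D lam : ℝ) (hl : 0 < lam) (Y : Fin n → ℝ) (U : Set (Fin p → ℝ)) :
    slrPost n p X D lam Y Set.univ U = (∑ S, mm X D lam Y S {Q | sparseVec S Q ∈ U}).toReal /
      (∑ S, mm X D lam Y S Set.univ).toReal := by
  rw [ENNReal.toReal_sum fun S _ => mm_ne_top D lam hl Y S _, ENNReal.toReal_sum fun S _ => mm_ne_top D lam hl Y S _]
  unfold slrPost gpostP
  congr 1
  · apply Finset.sum_congr rfl
    intro S _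
    rw [mm_toReal D lam hl]
    simp only [Set.mem_univ, if_true, Fintype.card_coe]
    rfl
  · apply Finset.sum_congr rfl
    intro S _
    rw [mm_toReal D lam hl, Measure.restrict_univ]
    simp only [Fintype.card_coe]
    rfl

lemma post_le (D lam : ℝ) (hl : 0 < lam) (Y : Fin n → ℝ) (U : Set (Fin p → ℝ)) (c : ℝ) (hc : 0 ≤ c)
    (h : ∑ S, mm X D lam Y S {Q | sparseVec S Q ∈ U} ≤ ENNReal.ofReal c * ∑ S, mm X D lam Y S Set.univ) :
    slrPost n p X D lam Y Set.univ U ≤ c := by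
  rw [post_eq D lam hl]
  apply div_le_of_le_mul₀ ENNReal.toReal_nonneg hc
  have ht : ∑ S, mm X D lam Y S Set.univ ≠ ⊤ := ENNReal.sum_ne_top.2 fun S _ => mm_ne_top D lam hl Y S _
  have := ENNReal.toReal_mono (ENNReal.mul_ne_top ENNReal.ofReal_ne_top ht) h
  rwa [ENNReal.toReal_mul, ENNReal.toReal_ofReal hc] at this

lemma post_le_one (D lam : ℝ) (hl : 0 < lam) (Y : Fin n → ℝ) (U : Set (Fin p → ℝ)) :
    slrPost n p X D lam Y Set.univ U ≤ 1 := by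
  apply post_le D lam hl Y U 1 zero_le_one
  rw [ENNReal.ofReal_one, one_mul]
  exact Finset.sum_le_sum fun S _ => mm_mono D lam Y S _

end part10

/-- Theorem 2 (ℓ∞ posterior contraction for sparse regression): under the mutual
coherence condition `τ̄ s* ≤ 1/9`, the sparse regression posterior contracts at the rate
`√(log p / n)` in the `ℓ_∞` norm. -/
theorem slr_sup_contraction :
    ∀ lam ρ : ℝ, 0 < lam → 0 < ρ →
    ∃ D₀ : ℝ, 0 < D₀ ∧ ∀ D : ℝ, D₀ < D →
    ∃ M C' : ℝ, 0 < M ∧ 0 < C' ∧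
    ∀ τb : ℝ, 0 < τb →
    ∀ (n p : ℕ) (X : Matrix (Fin n) (Fin p) ℝ),
      (∀ j : Fin p, (n : ℝ)⁻¹ * ∑ i, X i j * X i j = 1) →
      (∀ j l : Fin p, j ≠ l → |(n : ℝ)⁻¹ * ∑ i, X i j * X i l| ≤ τb) →
    ∀ (βs : Fin p → ℝ) (ss : ℕ),
      ss = (Finset.univ.filter fun j => βs j ≠ 0).card →
      τb * (ss : ℝ) ≤ 1 / 9 →
    ∀ (Ω : Type) (_ : MeasurableSpace Ω) (P : Measure Ω) (_ : IsProbabilityMeasure P)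
      (W : Ω → Fin n → ℝ), subG P ρ W →
    ∫ ω, slrPost n p X D lam (fun i => X.mulVec βs i + W ω i) Set.univ
        {β : Fin p → ℝ |
          M * Real.sqrt (Real.log p / n) < ⨆ j, |β j - βs j|} ∂P
      ≤ (p : ℝ) ^ (-C') := by
  intro lam ρ hl hρ
  have hli := inv_pos.2 hl
  have hK : 0 < 72 / ρ := by positivity
  set K := 72 / ρ with hKd
  refine ⟨4 * (3 * lam ^ 2 + 3 * K + 3 * lam + lam⁻¹ + 7), by positivity, fun D hD => ?_⟩
  have hD0 : 0 < D := lt_trans (by positivity) hD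
  set A1 := √(8 * (6 * D + 7 + 2 * lam⁻¹ + 3 * lam ^ 2)) with hA1
  set A2 := √(16 * (10 + 3 * lam ^ 2)) with hA2
  have a1 : 0 < A1 := Real.sqrt_pos.2 (by positivity)
  have a2 : 0 < A2 := Real.sqrt_pos.2 (by positivity)
  have a3 : A1 ^ 2 = 8 * (6 * D + 7 + 2 * lam⁻¹ + 3 * lam ^ 2) := Real.sq_sqrt (by positivity)
  have a4 : A2 ^ 2 = 16 * (10 + 3 * lam ^ 2) := Real.sq_sqrt (by positivity)
  refine ⟨4 * (2 * √(3 * K) + A1) + 4 * √(3 * K) + A2, 1, by positivity, one_pos, ?_⟩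
  intro τ hτ n p X hX1 hX2 βs ss hss hsτ Ω mΩ P hP W hW
  rcases Nat.eq_zero_or_pos p with hp0 | hp0
  · subst hp0
    have : ∀ Y U, slrPost n 0 X D lam Y Set.univ U ≤ 0 := by
      intro Y U
      apply post_le D lam hl Y U 0 le_rfl
      rw [Finset.sum_eq_zero]
      · exact zero_le
      · intro S _
        apply mm_zero
        rintro ⟨⟨j, -⟩, -⟩
        exact j.elim0
    refine (integral_nonpos fun ω => this _ _).trans ?_
    positivity
  have j0 : Fin p := ⟨0, hp0⟩
  have hn : 0 < (n : ℝ) := by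
    rcases Nat.eq_zero_or_pos n with h | h
    · have := hX1 j0
      have hn0 : (n : ℝ) = 0 := by rw [h]; simp
      rw [hn0, _root_.inv_zero, zero_mul] at this
      exact absurd this zero_ne_one
    · exact_mod_cast h
  have h1 : ∀ j, xcol X j ⬝ᵥ xcol X j = n := by
    intro j
    have := hX1 j
    rw [inv_mul_eq_iff_eq_mul₀ hn.ne', mul_one] at this
    exact this
  have h2 : ∀ j l, j ≠ l → |xcol X j ⬝ᵥ xcol X l| ≤ n * τ := by
    intro j l hjl
    have := hX2 j l hjl
    rw [abs_mul, abs_inv, abs_of_pos hn, inv_mul_le_iff₀ hn] at this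
    exact this
  rcases Nat.lt_or_ge p 2 with hp1 | hp2
  · have : p = 1 := by omega
    have hb := integ_bound P (fun ω => slrPost n p X D lam (fun i => X.mulVec βs i + W ω i) Set.univ
        {β : Fin p → ℝ | (4 * (2 * √(3 * K) + A1) + 4 * √(3 * K) + A2) * Real.sqrt (Real.log p / n) < ⨆ j, |β j - βs j|}) ∅ 1 0
        zero_le_one le_rfl (fun ω => post_le_one D lam hl _ _) (fun ω _ => post_le_one D lam hl _ _) (by simp)
    have hp1' : ((p : ℝ)) ^ (-1 : ℝ) = 1 := by rw [this]; simp
    rw [hp1']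
    simpa using hb
  · have hb := integ_bound P (fun ω => slrPost n p X D lam (fun i => X.mulVec βs i + W ω i) Set.univ
        {β : Fin p → ℝ | (4 * (2 * √(3 * K) + A1) + 4 * √(3 * K) + A2) * Real.sqrt (Real.log p / n) < ⨆ j, |β j - βs j|})
        {ω | ¬ goodW X K (W ω)} (3 * Real.exp (-5 * Real.log p)) (Real.exp (-5 * Real.log p)) (by positivity) (by positivity)
        (fun ω => post_le_one D lam hl _ _) (fun ω hω => ?_) (prob_good hp0 X P ρ hρ W hW)
    · refine hb.trans ?_
      have hpp : (0 : ℝ) < p := by exact_mod_cast hp0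
      have hL2 : Real.log 2 ≤ Real.log p := Real.log_le_log (by norm_num) (by exact_mod_cast hp2)
      rw [Real.rpow_def_of_pos hpp]
      have e4 : (4 : ℝ) = Real.exp (2 * Real.log 2) := by
        rw [two_mul, Real.exp_add, Real.exp_log (by norm_num)]; norm_num
      calc 3 * Real.exp (-5 * Real.log p) + Real.exp (-5 * Real.log p) = 4 * Real.exp (-5 * Real.log p) := by ring
        _ = Real.exp (2 * Real.log 2 + -5 * Real.log p) := by rw [Real.exp_add, ← e4]
        _ ≤ _ := by
          apply Real.exp_le_exp.2
          have := Real.log_two_gt_d9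
          linarith
    · have hgood : goodW X K (W ω) := by
        by_contra h; exact hω h
      apply post_le D lam hl _ _ _ (by positivity)
      exact main_sum hp2 τ hτ hn h1 h2 K D lam hK hl hD.le (W ω) hgood βs (by rw [← hss]; exact hsτ) A1 A2 _ _ a1 a3.ge le_rfl a2 a4.ge le_rfl
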